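/- arXiv:1511.07670 — 12 statements merged into one kernel-verified Lean document; each statement's English description precedes it below -/
import Mathlib

section
/- For every κ > 0, r > 0 and every complex number z with Re z < 0, one has ∫₀^∞ e^{z t} · (κ r / ((4π t)^{3/2} sinh(κ r))) · exp(−κ² t − r²/(4t)) dt = κ e^{−r √(κ² − z)} / (4π sinh(κ r)), where √(κ² − z) denotes the principal branch of the square root (well defined since Re(κ² − z) > 0). In other words, the off-diagonal entry of the principal matrix on hyperbolic 3-space equals the stated closed-form expression. -/
open Real MeasureTheory Set

open Filter Topology

theorem erfTop : Tendsto (fun x : ℝ => ∫ u in (0:ℝ)..x, Real.exp (-u ^ 2)) atTop (𝓝 (√π / 2)) := by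
  have h1 : IntegrableOn (fun u : ℝ => Real.exp (-u ^ 2)) (Ioi 0) := by
    have := (integrable_exp_neg_mul_sq (b := 1) one_pos).integrableOn (s := Ioi (0:ℝ))
    simpa using this
  have h2 := intervalIntegral_tendsto_integral_Ioi (0:ℝ) h1 tendsto_id
  have h3 := integral_gaussian_Ioi 1
  simp only [neg_mul, one_mul, div_one] at h3
  rw [h3] at h2
  exact h2

theorem erfBot : Tendsto (fun x : ℝ => ∫ u in (0:ℝ)..x, Real.exp (-u ^ 2)) atBot (𝓝 (-(√π / 2))) := by
  have h := (erfTop.comp tendsto_neg_atBot_atTop).neg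
  refine h.congr fun x => ?_
  have h2 := intervalIntegral.integral_comp_neg (a := 0) (b := x) (fun u : ℝ => Real.exp (-u ^ 2))
  simp only [neg_zero, even_two, Even.neg_pow] at h2
  simp only [Function.comp]
  rw [intervalIntegral.integral_symm, neg_neg, h2]

theorem erfDeriv (x : ℝ) : HasDerivAt (fun x : ℝ => ∫ u in (0:ℝ)..x, Real.exp (-u ^ 2))
    (Real.exp (-x ^ 2)) x := by
  have hc : Continuous (fun u : ℝ => Real.exp (-u ^ 2)) := by fun_prop
  exact (intervalIntegral.integral_hasDerivAt_right
    (hc.intervalIntegrable _ _) (hc.stronglyMeasurableAtFilter _ _) hc.continuousAt)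

theorem realCase (c s : ℝ) (hc : 0 < c) (hs : 0 < s) :
    IntegrableOn (fun t : ℝ => Real.exp (-(s ^ 2 * t)) * (Real.exp (-(c ^ 2 / t)) / (t * √t))) (Ioi 0) ∧
    ∫ t in Ioi (0:ℝ), Real.exp (-(s ^ 2 * t)) * (Real.exp (-(c ^ 2 / t)) / (t * √t))
      = √π / c * Real.exp (-(2 * c * s)) := by
  set E : ℝ → ℝ := fun x : ℝ => ∫ u in (0:ℝ)..x, Real.exp (-u ^ 2) with hE
  set h : ℝ → ℝ := fun t => -(1 / c) * (Real.exp (2 * c * s) * E (c / √t + s * √t)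
    + Real.exp (-(2 * c * s)) * E (c / √t - s * √t)) with hh
  set L0 : ℝ := -(1 / c) * (Real.exp (2 * c * s) * (√π / 2)
    + Real.exp (-(2 * c * s)) * (√π / 2)) with hL0
  set L1 : ℝ := -(1 / c) * (Real.exp (2 * c * s) * (√π / 2)
    + Real.exp (-(2 * c * s)) * (-(√π / 2))) with hL1
  have hsq0 : Tendsto (fun t : ℝ => √t) (𝓝[>] 0) (𝓝[>] 0) := by
    refine tendsto_nhdsWithin_iff.2 ⟨?_, ?_⟩
    · have := (Real.continuous_sqrt.tendsto 0)
      rw [Real.sqrt_zero] at this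
      exact this.mono_left nhdsWithin_le_nhds
    · filter_upwards [self_mem_nhdsWithin] with t ht
      exact Real.sqrt_pos.2 ht
  have hinv0 : Tendsto (fun t : ℝ => c / √t) (𝓝[>] 0) atTop := by
    have := (tendsto_inv_nhdsGT_zero.comp hsq0).const_mul_atTop hc
    exact this.congr fun t => by simp [div_eq_mul_inv]
  have hs0 : Tendsto (fun t : ℝ => s * √t) (𝓝[>] 0) (𝓝 0) := by
    have := (hsq0.mono_right nhdsWithin_le_nhds).const_mul s
    simpa using this
  have hinf : Tendsto (fun t : ℝ => s * √t) atTop atTop := Real.tendsto_sqrt_atTop.const_mul_atTop hs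
  have hinvinf : Tendsto (fun t : ℝ => c / √t) atTop (𝓝 0) :=
    Tendsto.const_div_atTop Real.tendsto_sqrt_atTop c
  have lim0 : Tendsto h (𝓝[>] 0) (𝓝 L0) := by
    refine Tendsto.const_mul _ (Tendsto.add (Tendsto.const_mul _ (erfTop.comp ?_))
      (Tendsto.const_mul _ (erfTop.comp ?_)))
    · exact hinv0.atTop_add hs0
    · simp only [sub_eq_add_neg]
      exact hinv0.atTop_add hs0.neg
  have lim1 : Tendsto h atTop (𝓝 L1) := by
    refine Tendsto.const_mul _ (Tendsto.add (Tendsto.const_mul _ (erfTop.comp ?_))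
      (Tendsto.const_mul _ (erfBot.comp ?_)))
    · exact hinvinf.add_atTop hinf
    · simp only [sub_eq_add_neg]
      exact hinvinf.add_atBot (tendsto_neg_atTop_atBot.comp hinf)
  have hder : ∀ t ∈ Ioi (0:ℝ), HasDerivAt h
      (Real.exp (-(s ^ 2 * t)) * (Real.exp (-(c ^ 2 / t)) / (t * √t))) t := by
    intro t ht
    have ht : 0 < t := ht
    have hq : 0 < √t := Real.sqrt_pos.2 ht
    have hsq := Real.hasDerivAt_sqrt ht.ne'
    have hA1 := (hasDerivAt_const t c).div hsq hq.ne'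
    have hA2 := hsq.const_mul s
    have hA := (erfDeriv (c / √t + s * √t)).comp t (hA1.add hA2)
    have hB := (erfDeriv (c / √t - s * √t)).comp t (hA1.sub hA2)
    have := ((hA.const_mul (Real.exp (2 * c * s))).add
      (hB.const_mul (Real.exp (-(2 * c * s))))).const_mul (-(1 / c))
    refine this.congr_deriv ?_
    have e0 : √t ^ 2 = t := Real.sq_sqrt ht.le
    generalize √t = q at *
    subst e0
    have e1 : Real.exp (-(c / q + s * q) ^ 2) =
        Real.exp (-(s ^ 2 * q ^ 2)) * Real.exp (-(c ^ 2 / q ^ 2)) * (Real.exp (-(2 * c * s))) := by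
      rw [← Real.exp_add, ← Real.exp_add]; congr 1; field_simp; ring
    have e2 : Real.exp (-(c / q - s * q) ^ 2) =
        Real.exp (-(s ^ 2 * q ^ 2)) * Real.exp (-(c ^ 2 / q ^ 2)) * (Real.exp (2 * c * s)) := by
      rw [← Real.exp_add, ← Real.exp_add]; congr 1; field_simp; ring
    have e3 : Real.exp (-(2 * c * s)) = (Real.exp (2 * c * s))⁻¹ := Real.exp_neg _
    rw [e1, e2, e3]
    have := (Real.exp_pos (2 * c * s)).ne'
    field_simp
    ring
  set g : ℝ → ℝ := fun t => if t ≤ 0 then L0 else h t with hg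
  have geq : ∀ t, 0 < t → g t = h t := fun t ht => by simp [hg, not_le.2 ht]
  have g0 : g 0 = L0 := by simp [hg]
  have hcont : ContinuousWithinAt g (Ici 0) 0 := by
    rw [← continuousWithinAt_Ioi_iff_Ici]
    unfold ContinuousWithinAt
    rw [g0]
    refine lim0.congr' ?_
    filter_upwards [self_mem_nhdsWithin] with t ht using (geq t ht).symm
  have hder' : ∀ t ∈ Ioi (0:ℝ), HasDerivAt g
      (Real.exp (-(s ^ 2 * t)) * (Real.exp (-(c ^ 2 / t)) / (t * √t))) t := by
    intro t ht
    refine (hder t ht).congr_of_eventuallyEq ?_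
    filter_upwards [Ioi_mem_nhds ht] with u hu using geq u hu
  have hpos : ∀ t ∈ Ioi (0:ℝ),
      0 ≤ (Real.exp (-(s ^ 2 * t)) * (Real.exp (-(c ^ 2 / t)) / (t * √t))) := by
    intro t ht
    have ht : 0 < t := ht
    positivity
  have hlim : Tendsto g atTop (𝓝 L1) := by
    refine lim1.congr' ?_
    filter_upwards [Ioi_mem_atTop 0] with u hu using (geq u hu).symm
  refine ⟨integrableOn_Ioi_deriv_of_nonneg hcont hder' hpos hlim, ?_⟩
  rw [integral_Ioi_of_hasDerivAt_of_nonneg hcont hder' hpos hlim, g0, hL0, hL1]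
  ring

theorem complexCase (c : ℝ) (hc : 0 < c) (w : ℂ) (hw : 0 < w.re) :
    ∫ t in Ioi (0:ℝ), Complex.exp (-(w * t)) * ((Real.exp (-(c ^ 2 / t)) / (t * √t) : ℝ) : ℂ)
      = (√π / c : ℝ) * Complex.exp (-(2 * c * w ^ ((1:ℂ) / 2))) := by
  set k : ℝ → ℝ := fun t => Real.exp (-(c ^ 2 / t)) / (t * √t) with hk
  have kpos : ∀ t, 0 < t → 0 ≤ k t := fun t ht => by simp only [hk]; positivity
  have kmeas : Measurable k := by
    simp only [hk]; fun_prop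
  have kint : ∀ a : ℝ, 0 < a → IntegrableOn (fun t : ℝ => Real.exp (-(a * t)) * k t) (Ioi 0) := by
    intro a ha
    have := (realCase c (√a) hc (Real.sqrt_pos.2 ha)).1
    rwa [Real.sq_sqrt ha.le] at this
  set U : Set ℂ := {w | 0 < w.re} with hU
  have Uopen : IsOpen U := isOpen_lt continuous_const Complex.continuous_re
  have Upre : IsPreconnected U := (convex_halfSpace_re_gt 0).isPreconnected
  set F : ℂ → ℂ := fun w => ∫ t in Ioi (0:ℝ), Complex.exp (-(w * t)) * ((k t : ℝ) : ℂ) with hF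
  set G : ℂ → ℂ := fun w => (√π / c : ℝ) * Complex.exp (-(2 * c * w ^ ((1:ℂ) / 2))) with hG
  have nrm : ∀ (w : ℂ) (t : ℝ), ‖Complex.exp (-(w * t))‖ = Real.exp (-(w.re * t)) := by
    intro w t; rw [Complex.norm_exp]; simp
  have Fdiff : DifferentiableOn ℂ F U := by
    intro w₀ hw₀
    have hw₀ : 0 < w₀.re := hw₀
    set a := w₀.re / 4 with ha
    have ha0 : 0 < a := by positivity
    have hs : {w : ℂ | 2 * a < w.re} ∈ 𝓝 w₀ :=
      (isOpen_lt continuous_const Complex.continuous_re).mem_nhds (by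
        show 2 * a < w₀.re
        linarith)
    have := hasDerivAt_integral_of_dominated_loc_of_deriv_le (μ := volume.restrict (Ioi (0:ℝ)))
      (F := fun (w : ℂ) (t : ℝ) => Complex.exp (-(w * t)) * ((k t : ℝ) : ℂ))
      (F' := fun (w : ℂ) (t : ℝ) => Complex.exp (-(w * t)) * (-(1 * (t:ℂ))) * ((k t : ℝ) : ℂ))
      (bound := fun t => (1 / a) * (Real.exp (-(a * t)) * k t)) (x₀ := w₀) hs ?_ ?_ ?_ ?_ ?_ ?_
    · exact this.2.differentiableAt.differentiableWithinAt
    · refine Eventually.of_forall fun w => Measurable.aestronglyMeasurable ?_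
      fun_prop
    · refine (kint _ hw₀).mono' (Measurable.aestronglyMeasurable (by fun_prop)) ?_
      filter_upwards [ae_restrict_mem measurableSet_Ioi] with t ht
      rw [norm_mul, nrm, Complex.norm_real, Real.norm_of_nonneg (kpos t ht)]
    · exact Measurable.aestronglyMeasurable (by fun_prop)
    · filter_upwards [ae_restrict_mem measurableSet_Ioi] with t ht w hw
      have ht : 0 < t := ht
      have hw : 2 * a < w.re := hw
      rw [norm_mul, norm_mul, nrm, Complex.norm_real, Real.norm_of_nonneg (kpos t ht), norm_neg,
        one_mul, Complex.norm_real, Real.norm_of_nonneg ht.le, ← mul_assoc]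
      refine mul_le_mul_of_nonneg_right ?_ (kpos t ht)
      have h1 : a * t ≤ Real.exp (a * t) := by linarith [Real.add_one_le_exp (a * t)]
      have h2 : t ≤ 1 / a * Real.exp (a * t) := by
        rw [one_div, inv_mul_eq_div, le_div_iff₀ ha0]; linarith
      calc Real.exp (-(w.re * t)) * t ≤ Real.exp (-(2 * a * t)) * (1 / a * Real.exp (a * t)) := by
            gcongr
        _ = 1 / a * (Real.exp (-(2 * a * t)) * Real.exp (a * t)) := by ring
        _ = 1 / a * Real.exp (-(a * t)) := by rw [← Real.exp_add]; congr 2; ring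
    · exact (kint a ha0).const_mul _
    · refine Eventually.of_forall fun t w _ => ?_
      exact (((hasDerivAt_id w).mul_const (t:ℂ)).neg.cexp).mul_const _
  have Gdiff : DifferentiableOn ℂ G U := by
    intro w₀ hw₀
    have : DifferentiableAt ℂ (fun w : ℂ => w ^ ((1:ℂ)/2)) w₀ :=
      differentiableAt_id.cpow_const (Or.inl hw₀)
    exact ((((this.const_mul _).neg).cexp).const_mul _).differentiableWithinAt
  have hreal : ∀ x : ℝ, 0 < x → F x = G x := by
    intro x hx
    have h1 := (realCase c (√x) hc (Real.sqrt_pos.2 hx)).2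
    rw [Real.sq_sqrt hx.le] at h1
    have h2 : (x:ℂ) ^ ((1:ℂ)/2) = ((√x : ℝ) : ℂ) := by
      rw [Real.sqrt_eq_rpow, Complex.ofReal_cpow hx.le]; norm_num
    simp only [hF, hG, h2]
    have h3 := congrArg (fun y : ℝ => (y:ℂ)) h1
    simp only [← integral_complex_ofReal] at h3
    push_cast at h3 ⊢
    rw [← h3]
    simp only [hk]
    push_cast
    rfl
  have hfreq : ∃ᶠ z in 𝓝[≠] (1:ℂ), F z = G z := by
    have ht : Tendsto (fun x : ℝ => (x:ℂ)) (𝓝[≠] 1) (𝓝[≠] (1:ℂ)) := by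
      refine tendsto_nhdsWithin_iff.2 ⟨?_, ?_⟩
      · have := (Complex.continuous_ofReal.tendsto 1)
        rw [Complex.ofReal_one] at this
        exact this.mono_left nhdsWithin_le_nhds
      · filter_upwards [self_mem_nhdsWithin] with t ht
        simpa using ht
    refine ht.frequently (Eventually.frequently ?_)
    filter_upwards [nhdsWithin_le_nhds (Ioi_mem_nhds (zero_lt_one' ℝ))] with x hx using hreal x hx
  exact (Fdiff.analyticOnNhd Uopen).eqOn_of_preconnected_of_frequently_eq
    (Gdiff.analyticOnNhd Uopen) Upre (by simp [hU]) hfreq hw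

/-- The off-diagonal entry of the principal matrix on hyperbolic 3-space:
for `κ > 0`, `r > 0` and `z : ℂ` with `Re z < 0`,
`∫₀^∞ e^{z t} K_t(r) dt = κ e^{-r √(κ² - z)} / (4π sinh (κ r))`,
where `K_t(r) = (κ r / ((4π t)^{3/2} sinh (κ r))) exp(-κ² t - r²/(4t))` is the heat
kernel of `ℍ³_κ` and the square root is the principal branch (complex `cpow`). -/
theorem offdiag_principal_matrix_H3 (κ r : ℝ) (hκ : 0 < κ) (hr : 0 < r)
    (z : ℂ) (hz : z.re < 0) :
    ∫ t in Ioi (0 : ℝ),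
        Complex.exp (z * (t : ℂ)) *
          ((κ * r / ((4 * π * t) ^ ((3 : ℝ) / 2) * Real.sinh (κ * r)) *
             Real.exp (-κ ^ 2 * t - r ^ 2 / (4 * t)) : ℝ) : ℂ)
      = (κ : ℂ) * Complex.exp (-(r : ℂ) * ((κ : ℂ) ^ 2 - z) ^ ((1 : ℂ) / 2)) /
          (4 * (π : ℂ) * (Real.sinh (κ * r) : ℂ)) := by
  have hS : 0 < Real.sinh (κ * r) := Real.sinh_pos_iff.2 (by positivity)
  have hw : 0 < ((κ:ℂ) ^ 2 - z).re := by
    have : ((κ:ℂ) ^ 2 - z).re = κ ^ 2 - z.re := by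
      rw [← Complex.ofReal_pow]; simp [-Complex.ofReal_pow]
    rw [this]; nlinarith [sq_nonneg κ]
  have h := complexCase (r / 2) (by positivity) _ hw
  have hint : ∀ t ∈ Ioi (0:ℝ), Complex.exp (z * (t : ℂ)) *
          ((κ * r / ((4 * π * t) ^ ((3 : ℝ) / 2) * Real.sinh (κ * r)) *
             Real.exp (-κ ^ 2 * t - r ^ 2 / (4 * t)) : ℝ) : ℂ)
      = ((κ * r / (8 * π * √π * Real.sinh (κ * r)) : ℝ) : ℂ) *
        (Complex.exp (-(((κ:ℂ) ^ 2 - z) * t)) *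
          ((Real.exp (-((r / 2) ^ 2 / t)) / (t * √t) : ℝ) : ℂ)) := by
    intro t ht
    have ht : 0 < t := ht
    have e1 : (4 * π * t) ^ ((3 : ℝ) / 2) = 8 * π * √π * (t * √t) := by
      have : (3:ℝ)/2 = 1 + 1/2 := by norm_num
      rw [this, Real.rpow_add (by positivity), Real.rpow_one, ← Real.sqrt_eq_rpow,
        Real.sqrt_mul (by positivity), Real.sqrt_mul (by positivity)]
      have : √(4:ℝ) = 2 := by
        rw [show (4:ℝ) = 2 ^ 2 by norm_num]; exact Real.sqrt_sq (by norm_num)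
      rw [this]; ring
    have e2 : Real.exp (-κ ^ 2 * t - r ^ 2 / (4 * t)) =
        Real.exp (-(κ ^ 2 * t)) * Real.exp (-((r / 2) ^ 2 / t)) := by
      rw [← Real.exp_add]; congr 1; field_simp; ring
    have e3 : Complex.exp (-(((κ:ℂ) ^ 2 - z) * t)) =
        Complex.exp (z * t) * ((Real.exp (-(κ ^ 2 * t)) : ℝ) : ℂ) := by
      push_cast
      rw [← Complex.exp_add]; congr 1; ring
    rw [e1, e2, e3, mul_assoc (Complex.exp _), mul_left_comm _ (Complex.exp _)]
    congr 1
    rw [← Complex.ofReal_mul, ← Complex.ofReal_mul]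
    congr 1
    have : 0 < √t := Real.sqrt_pos.2 ht
    field_simp
  rw [setIntegral_congr_fun measurableSet_Ioi hint, integral_const_mul, h, ← mul_assoc,
    ← Complex.ofReal_mul]
  have e4 : κ * r / (8 * π * √π * Real.sinh (κ * r)) * (√π / (r / 2)) =
      κ / (4 * π * Real.sinh (κ * r)) := by
    have : 0 < √π := Real.sqrt_pos.2 Real.pi_pos
    field_simp
    ring
  have e5 : -(2 * ((r / 2 : ℝ) : ℂ) * ((κ:ℂ) ^ 2 - z) ^ ((1:ℂ) / 2)) =
      -(r : ℂ) * ((κ : ℂ) ^ 2 - z) ^ ((1 : ℂ) / 2) := by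
    push_cast; ring
  rw [e4, e5]
  push_cast
  ring
end

section
/- For every κ > 0, r > 0 and a > 0, one has ∫₀^∞ e^{−a t} K_t(r) dt = (1/(2π)) ∫_{κ r}^{∞} e^{−u √(1/4 + a/κ²)} / √(2 cosh u − 2 cosh(κ r)) du, where K_t(r) is the heat kernel of the hyperbolic plane ℍ²_κ. That is, the off-diagonal entry of the principal matrix on the hyperbolic plane at energy z = −a equals (1/(2π)) times the Legendre function of the second kind Q_λ(cosh(κ r)) expressed by its integral representation. -/
open Real MeasureTheory Set Filter Topology

lemma aux_gauss (A B : ℝ) (hA : 0 < A) (hB : 0 < B) :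
    IntegrableOn (fun t : ℝ => A / (t * √t) * Real.exp (-(B ^ 2 * t) - A ^ 2 / t)) (Ioi 0) ∧
    ∫ t in Ioi (0 : ℝ), A / (t * √t) * Real.exp (-(B ^ 2 * t) - A ^ 2 / t)
      = √π * Real.exp (-(2 * A * B)) := by
  set G : ℝ → ℝ := fun x => ∫ y in (0 : ℝ)..x, Real.exp (-1 * y ^ 2) with hG
  have hGd : ∀ x, HasDerivAt G (Real.exp (-1 * x ^ 2)) x := by
    intro x
    have hc : Continuous (fun y : ℝ => Real.exp (-1 * y ^ 2)) := by fun_prop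
    exact hc.integral_hasStrictDerivAt 0 x |>.hasDerivAt
  have hGodd : ∀ x, G (-x) = - G x := by
    intro x
    simp only [hG]
    have := intervalIntegral.integral_comp_neg (a := 0) (b := x)
      (fun y : ℝ => Real.exp (-1 * y ^ 2))
    simp only [neg_sq, neg_zero] at this
    rw [this, intervalIntegral.integral_symm]
  have hGtop : Tendsto G atTop (𝓝 (√π / 2)) := by
    have h := intervalIntegral_tendsto_integral_Ioi (0 : ℝ)
      (integrable_exp_neg_mul_sq (b := 1) one_pos).integrableOn tendsto_id
    rw [integral_gaussian_Ioi] at h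
    simpa [hG] using h
  have hGbot : Tendsto G atBot (𝓝 (-(√π / 2))) := by
    have h := (hGtop.comp tendsto_neg_atBot_atTop).neg
    refine h.congr fun x => ?_
    simp [hGodd]
  set H : ℝ → ℝ := fun t => -Real.exp (-(2 * A * B)) * G (A / √t - B * √t)
    - Real.exp (2 * A * B) * G (A / √t + B * √t) with hH
  set m : ℝ := -Real.exp (-(2 * A * B)) * (√π / 2) - Real.exp (2 * A * B) * (√π / 2) with hm
  have hsq0 : Tendsto (fun t : ℝ => √t) (𝓝[>] 0) (𝓝[>] 0) := by
    refine tendsto_nhdsWithin_iff.2 ⟨?_, ?_⟩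
    · have := (Real.continuous_sqrt.tendsto 0).mono_left (nhdsWithin_le_nhds (s := Ioi 0))
      simpa using this
    · filter_upwards [self_mem_nhdsWithin] with t ht
      exact Real.sqrt_pos.2 ht
  have hsq0' : Tendsto (fun t : ℝ => √t) (𝓝[>] 0) (𝓝 0) := hsq0.mono_right nhdsWithin_le_nhds
  have hinv0 : Tendsto (fun t : ℝ => A / √t) (𝓝[>] 0) atTop := by
    simp_rw [div_eq_mul_inv]
    exact (tendsto_inv_nhdsGT_zero.comp hsq0).const_mul_atTop hA
  have hinvtop : Tendsto (fun t : ℝ => A / √t) atTop (𝓝 0) :=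
    tendsto_const_nhds.div_atTop Real.tendsto_sqrt_atTop
  have hBtop : Tendsto (fun t : ℝ => B * √t) atTop atTop :=
    Real.tendsto_sqrt_atTop.const_mul_atTop hB
  have hH0 : Tendsto H (𝓝[>] 0) (𝓝 m) := by
    refine Tendsto.sub (Tendsto.const_mul _ (hGtop.comp ?_)) (Tendsto.const_mul _ (hGtop.comp ?_))
    · have := hinv0.atTop_add ((hsq0'.const_mul B).neg)
      simpa [sub_eq_add_neg] using this
    · exact hinv0.atTop_add (hsq0'.const_mul B)
  have hHtop : Tendsto H atTop (𝓝 (-Real.exp (-(2 * A * B)) * (-(√π / 2))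
      - Real.exp (2 * A * B) * (√π / 2))) := by
    refine Tendsto.sub (Tendsto.const_mul _ (hGbot.comp ?_)) (Tendsto.const_mul _ (hGtop.comp ?_))
    · have := hinvtop.add_atBot (tendsto_neg_atTop_atBot.comp hBtop)
      simpa [sub_eq_add_neg] using this
    · exact hinvtop.add_atTop hBtop
  have hHd : ∀ t ∈ Ioi (0 : ℝ), HasDerivAt H
      (A / (t * √t) * Real.exp (-(B ^ 2 * t) - A ^ 2 / t)) t := by
    intro t ht
    have ht : 0 < t := ht
    have hs : 0 < √t := Real.sqrt_pos.2 ht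
    have h1 := Real.hasDerivAt_sqrt ht.ne'
    have h2 := (hasDerivAt_const t A).div h1 hs.ne'
    have h3 := h2.sub (h1.const_mul B)
    have h4 := h2.add (h1.const_mul B)
    have h5 := (((hGd _).comp t h3).const_mul (-Real.exp (-(2 * A * B)))).sub
      (((hGd _).comp t h4).const_mul (Real.exp (2 * A * B)))
    refine h5.congr_deriv ?_
    simp only [Pi.sub_apply, Pi.add_apply, Pi.div_apply]
    obtain ⟨q, hq, rfl⟩ : ∃ q : ℝ, 0 < q ∧ t = q ^ 2 := ⟨√t, hs, (Real.sq_sqrt ht.le).symm⟩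
    rw [Real.sqrt_sq hq.le]
    have e1 : Real.exp (-1 * (A / q - B * q) ^ 2)
        = Real.exp (-(B ^ 2 * q ^ 2) - A ^ 2 / q ^ 2) * Real.exp (2 * A * B) := by
      rw [← Real.exp_add]; congr 1; field_simp; ring
    have e2 : Real.exp (-1 * (A / q + B * q) ^ 2)
        = Real.exp (-(B ^ 2 * q ^ 2) - A ^ 2 / q ^ 2) * Real.exp (-(2 * A * B)) := by
      rw [← Real.exp_add]; congr 1; field_simp; ring
    rw [e1, e2]
    have e3 : Real.exp (-(2 * A * B)) = (Real.exp (2 * A * B))⁻¹ := Real.exp_neg _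
    rw [e3]
    have := Real.exp_pos (2 * A * B)
    generalize Real.exp (2 * A * B) = E at *
    generalize Real.exp (-(B ^ 2 * q ^ 2) - A ^ 2 / q ^ 2) = F at *
    field_simp
    ring
  set K : ℝ → ℝ := Function.update H 0 m with hK
  have hKH : ∀ t : ℝ, 0 < t → K t = H t := fun t ht => Function.update_of_ne ht.ne' _ _
  have hKc : ContinuousWithinAt K (Ici 0) 0 := by
    rw [hK, continuousWithinAt_update_same]
    simpa using hH0
  have hKd : ∀ t ∈ Ioi (0 : ℝ), HasDerivAt K
      (A / (t * √t) * Real.exp (-(B ^ 2 * t) - A ^ 2 / t)) t := by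
    intro t ht
    refine (hHd t ht).congr_of_eventuallyEq ?_
    filter_upwards [Ioi_mem_nhds ht] with x hx using hKH x hx
  have hKtop := hHtop.congr' (f₂ := K) (by
    filter_upwards [Ioi_mem_atTop (0 : ℝ)] with x hx using (hKH x hx).symm)
  have hpos : ∀ t ∈ Ioi (0 : ℝ), 0 ≤ A / (t * √t) * Real.exp (-(B ^ 2 * t) - A ^ 2 / t) := by
    intro t ht
    have ht : 0 < t := ht
    positivity
  refine ⟨integrableOn_Ioi_deriv_of_nonneg hKc hKd hpos hKtop, ?_⟩
  rw [integral_Ioi_of_hasDerivAt_of_nonneg hKc hKd hpos hKtop]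
  have : K 0 = m := Function.update_self _ _ _
  rw [this, hm]
  ring

lemma aux_int (c B : ℝ) (hc : 0 < c) (hB : 0 < B) :
    IntegrableOn (fun u : ℝ => Real.exp (-u * B) / √(Real.cosh u - Real.cosh c)) (Ioi c) := by
  have h0 := integrableOn_rpow_mul_exp_neg_mul_rpow (p := 1) (s := -(1/2)) (b := B)
    (by norm_num) one_pos hB
  have h1 : IntegrableOn (fun u : ℝ => (u - c) ^ (-(1/2) : ℝ) * Real.exp (-B * (u - c) ^ (1:ℝ)))
      (Ioi c) := by
    have hmp := (measurePreserving_sub_right volume c).integrableOn_comp_preimage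
      (MeasurableEquiv.subRight c).measurableEmbedding (f := fun x : ℝ => x ^ (-(1/2) : ℝ) * Real.exp (-B * x ^ (1:ℝ))) (s := Ioi 0)
    have := hmp.2 h0
    simpa [Function.comp_def] using this
  have h2 := h1.const_mul ((√(Real.sinh c))⁻¹ * Real.exp (-c * B))
  refine Integrable.mono' h2 (by
    apply Measurable.aestronglyMeasurable
    fun_prop) ?_
  filter_upwards [ae_restrict_mem measurableSet_Ioi] with u hu
  have hu : c < u := hu
  have hs : 0 < Real.sinh c := Real.sinh_pos_iff.2 hc
  have hd : 0 < u - c := sub_pos.2 hu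
  have hb : Real.sinh c * (u - c) ≤ Real.cosh u - Real.cosh c := by
    have e : Real.cosh u = Real.cosh c * Real.cosh (u - c) + Real.sinh c * Real.sinh (u - c) := by
      rw [← Real.cosh_add]; congr 1; ring
    have h3 := Real.one_le_cosh (u - c)
    have h4 := Real.self_le_sinh_iff.2 hd.le
    have h5 := Real.cosh_pos c
    rw [e]
    nlinarith
  rw [Real.norm_of_nonneg (by positivity)]
  have e1 : (u - c) ^ (-(1/2) : ℝ) = (√(u - c))⁻¹ := by
    rw [Real.rpow_neg hd.le, Real.sqrt_eq_rpow]
  have e2 : Real.exp (-u * B) = Real.exp (-c * B) * Real.exp (-B * (u - c) ^ (1:ℝ)) := by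
    rw [← Real.exp_add, Real.rpow_one]; congr 1; ring
  rw [e1, e2]
  have h6 : √(Real.sinh c) * √(u - c) ≤ √(Real.cosh u - Real.cosh c) := by
    rw [← Real.sqrt_mul hs.le]; exact Real.sqrt_le_sqrt hb
  have h7 : 0 < √(Real.sinh c) * √(u - c) := by positivity
  calc _ ≤ Real.exp (-c * B) * Real.exp (-B * (u - c) ^ (1:ℝ)) / (√(Real.sinh c) * √(u - c)) := by
        gcongr
    _ = _ := by field_simp

/-- The off-diagonal entry of the principal matrix on the hyperbolic plane `ℍ²_κ`
at energy `z = -a` equals `(1/(2π))` times the Legendre function of the second kind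
`Q_λ(cosh (κ r))` in its integral representation: for `κ, r, a > 0`,
`∫₀^∞ e^{-a t} K_t(r) dt
  = (1/(2π)) ∫_{κ r}^∞ e^{-u √(1/4 + a/κ²)} / √(2 cosh u - 2 cosh (κ r)) du`,
where `K_t(r)` is the heat kernel of `ℍ²_κ`. -/
theorem offdiag_principal_matrix_H2 (κ r a : ℝ) (hκ : 0 < κ) (hr : 0 < r) (ha : 0 < a) :
    ∫ t in Ioi (0 : ℝ),
        Real.exp (-a * t) *
          ((Real.sqrt 2 / κ) * (4 * π * t) ^ (-(3 : ℝ) / 2) * Real.exp (-κ ^ 2 * t / 4) *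
            ∫ s in Ioi (κ * r),
              s * Real.exp (-s ^ 2 / (4 * κ ^ 2 * t)) /
                Real.sqrt (Real.cosh s - Real.cosh (κ * r)))
      = (1 / (2 * π)) *
          ∫ u in Ioi (κ * r),
            Real.exp (-u * Real.sqrt (1 / 4 + a / κ ^ 2)) /
              Real.sqrt (2 * Real.cosh u - 2 * Real.cosh (κ * r)) := by
  have hc : 0 < κ * r := mul_pos hκ hr
  set c := κ * r with hcdef
  set β := √(1 / 4 + a / κ ^ 2) with hβ
  have hβpos : 0 < β := by positivity
  have hβ2 : β ^ 2 = 1 / 4 + a / κ ^ 2 := Real.sq_sqrt (by positivity)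
  set f : ℝ → ℝ → ℝ := fun t s => (√2 / 4 / π / √π / √(Real.cosh s - Real.cosh c)) *
      ((s / (2 * κ)) / (t * √t) * Real.exp (-((κ * β) ^ 2 * t) - (s / (2 * κ)) ^ 2 / t)) with hf
  have hfint : ∀ s ∈ Ioi c, Integrable (fun t => f t s) (volume.restrict (Ioi 0)) ∧
      ∫ t in Ioi (0 : ℝ), f t s
        = √2 / 4 / π * (Real.exp (-s * β) / √(Real.cosh s - Real.cosh c)) := by
    intro s hs
    have hs0 : 0 < s := hc.trans hs
    obtain ⟨h1, h2⟩ := aux_gauss (s / (2 * κ)) (κ * β) (by positivity) (by positivity)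
    refine ⟨h1.const_mul _, ?_⟩
    simp only [hf]
    rw [integral_const_mul, h2]
    have e : -(2 * (s / (2 * κ)) * (κ * β)) = -s * β := by field_simp
    rw [e]
    have : √π ≠ 0 := by positivity
    field_simp
  have hnn : ∀ s ∈ Ioi c, ∀ t ∈ Ioi (0 : ℝ), 0 ≤ f t s := by
    intro s hs t ht
    have hs0 : 0 < s := hc.trans hs
    have ht : 0 < t := ht
    simp only [hf]
    positivity
  have hprod : Integrable (Function.uncurry f)
      ((volume.restrict (Ioi 0)).prod (volume.restrict (Ioi c))) := by
    rw [integrable_prod_iff' (by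
      apply Measurable.aestronglyMeasurable
      simp only [hf, Function.uncurry_def]
      fun_prop)]
    constructor
    · filter_upwards [ae_restrict_mem measurableSet_Ioi] with s hs using (hfint s hs).1
    · refine ((aux_int c β hc hβpos).const_mul (√2 / 4 / π)).congr ?_
      filter_upwards [ae_restrict_mem measurableSet_Ioi] with s hs
      rw [← (hfint s hs).2]
      refine setIntegral_congr_fun measurableSet_Ioi fun t ht => ?_
      exact (Real.norm_of_nonneg (hnn s hs t ht)).symm
  have hL : ∫ t in Ioi (0 : ℝ),
        Real.exp (-a * t) *
          ((Real.sqrt 2 / κ) * (4 * π * t) ^ (-(3 : ℝ) / 2) * Real.exp (-κ ^ 2 * t / 4) *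
            ∫ s in Ioi c,
              s * Real.exp (-s ^ 2 / (4 * κ ^ 2 * t)) /
                Real.sqrt (Real.cosh s - Real.cosh c))
      = ∫ t in Ioi (0 : ℝ), ∫ s in Ioi c, f t s := by
    refine setIntegral_congr_fun measurableSet_Ioi fun t ht => ?_
    have ht : 0 < t := ht
    rw [← integral_const_mul, ← integral_const_mul]
    refine setIntegral_congr_fun measurableSet_Ioi fun s hs => ?_
    simp only [hf]
    have e1 : (4 * π * t) ^ (-(3 : ℝ) / 2) = 1 / (8 * (π * √π) * (t * √t)) := by
      have hp : 0 < 4 * π * t := by positivity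
      rw [show (-(3 : ℝ) / 2) = -(1 + 1 / 2) by norm_num, Real.rpow_neg hp.le,
        Real.rpow_add hp, Real.rpow_one, ← Real.sqrt_eq_rpow, Real.sqrt_mul (by positivity),
        Real.sqrt_mul (by positivity), show √(4 : ℝ) = 2 by
          rw [show (4 : ℝ) = 2 ^ 2 by norm_num]; exact Real.sqrt_sq (by norm_num)]
      rw [one_div]; congr 1; ring
    have e2 : Real.exp (-((κ * β) ^ 2 * t) - (s / (2 * κ)) ^ 2 / t)
        = Real.exp (-a * t) * Real.exp (-κ ^ 2 * t / 4) *
          Real.exp (-s ^ 2 / (4 * κ ^ 2 * t)) := by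
      rw [← Real.exp_add, ← Real.exp_add]; congr 1
      rw [mul_pow, hβ2]; field_simp; ring
    rw [e1, e2]
    have : √π ≠ 0 := by positivity
    have : √t ≠ 0 := by positivity
    field_simp
    ring
  rw [hL, integral_integral_swap hprod, ← integral_const_mul]
  refine setIntegral_congr_fun measurableSet_Ioi fun s hs => ?_
  rw [(hfint s hs).2, ← mul_sub, Real.sqrt_mul (by norm_num)]
  have h2 : √2 * √2 = (2 : ℝ) := Real.mul_self_sqrt (by norm_num)
  have e : √2 / 4 / π = 1 / (2 * π) / √2 := by
    field_simp
    nlinarith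
  rw [e]
  simp only [div_eq_mul_inv, mul_inv]
  ring
end

section
/- For every κ > 0 and all μ, ν > 0, one has ∫₀^∞ K_t(0) (e^{−μ² t} − e^{−ν² t}) dt = (1/(2π)) ∫₀^∞ (e^{−t (1/2 + √(1/4 + μ²/κ²))} − e^{−t (1/2 + √(1/4 + ν²/κ²))}) / (1 − e^{−t}) dt, where K_t(0) = (√2/κ)(4π t)^{−3/2} e^{−κ² t/4} ∫_0^∞ s e^{−s²/(4κ² t)} / √(cosh s − 1) ds is the diagonal heat kernel of the hyperbolic plane ℍ²_κ. That is, the diagonal entry of the principal matrix on the hyperbolic plane equals (1/(2π))(ψ(1/2 + √(ν²/κ² + 1/4)) − ψ(1/2 + √(μ²/κ² + 1/4))) with the digamma function ψ expressed through its integral representation. -/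
open Real MeasureTheory Set

theorem aux_ftc (F F' : ℝ → ℝ) (L M : ℝ) (hd : ∀ x ∈ Ioi (0:ℝ), HasDerivAt F (F' x) x)
    (hp : ∀ x ∈ Ioi (0:ℝ), 0 ≤ F' x)
    (h0 : Filter.Tendsto F (nhdsWithin 0 (Ioi 0)) (nhds L))
    (h1 : Filter.Tendsto F Filter.atTop (nhds M)) :
    IntegrableOn F' (Ioi 0) ∧ ∫ t in Ioi (0:ℝ), F' t = M - L := by
  have hc : ContinuousWithinAt (Function.update F 0 L) (Ici 0) 0 := by
    rw [continuousWithinAt_update_same, show Ici (0:ℝ) \ {0} = Ioi 0 by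
      ext x; simp [lt_iff_le_and_ne, eq_comm]]
    exact h0
  have hd' : ∀ x ∈ Ioi (0:ℝ), HasDerivAt (Function.update F 0 L) (F' x) x := by
    intro x hx
    refine (hd x hx).congr_of_eventuallyEq ?_
    filter_upwards [isOpen_Ioi.mem_nhds hx] with y hy
    exact Function.update_of_ne (ne_of_gt hy) _ _
  have h1' : Filter.Tendsto (Function.update F 0 L) Filter.atTop (nhds M) := by
    refine h1.congr' ?_
    filter_upwards [Filter.eventually_gt_atTop 0] with y hy
    exact (Function.update_of_ne (ne_of_gt hy) _ _).symm
  refine ⟨integrableOn_Ioi_deriv_of_nonneg hc hd' hp h1', ?_⟩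
  rw [integral_Ioi_of_hasDerivAt_of_nonneg hc hd' hp h1']
  simp

theorem aux_erf : ∃ Φ : ℝ → ℝ, (∀ x, HasDerivAt Φ (exp (-x^2)) x) ∧
    Filter.Tendsto Φ Filter.atTop (nhds (√π / 2)) ∧
    Filter.Tendsto Φ Filter.atBot (nhds (-(√π / 2))) := by
  have hcont : Continuous (fun x : ℝ => exp (-x^2)) := by fun_prop
  have hint : Integrable (fun x : ℝ => exp (-x^2)) := by
    simpa using integrable_exp_neg_mul_sq (b := 1) one_pos
  have hv : ∫ x in Ioi (0:ℝ), exp (-x^2) = √π / 2 := by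
    simpa using integral_gaussian_Ioi 1
  have ht : Filter.Tendsto (fun x => ∫ u in (0:ℝ)..x, exp (-u^2)) Filter.atTop
      (nhds (√π / 2)) := by
    rw [← hv]
    exact intervalIntegral_tendsto_integral_Ioi 0 hint.integrableOn Filter.tendsto_id
  refine ⟨fun x => ∫ u in (0:ℝ)..x, exp (-u^2), ?_, ht, ?_⟩
  · intro x
    exact intervalIntegral.integral_hasDerivAt_right (hcont.intervalIntegrable _ _)
      hcont.stronglyMeasurable.stronglyMeasurableAtFilter hcont.continuousAt
  · have := (ht.comp Filter.tendsto_neg_atBot_atTop).neg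
    refine this.congr ?_
    intro x
    have h := intervalIntegral.integral_comp_neg (a := 0) (b := x) (fun u : ℝ => exp (-u^2))
    simp only [neg_sq, neg_zero] at h
    rw [h, Function.comp, intervalIntegral.integral_symm]
    simp

theorem aux_key (p q : ℝ) (hp : 0 < p) (hq : 0 < q) :
    IntegrableOn (fun t => q * (1 / (t * √t)) * exp (-(p^2 * t) - q^2 / t)) (Ioi 0) ∧
    ∫ t in Ioi (0:ℝ), q * (1 / (t * √t)) * exp (-(p^2 * t) - q^2 / t)
      = √π * exp (-(2 * p * q)) := by
  obtain ⟨Φ, hΦ, hT, hB⟩ := aux_erf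
  have hs0 : Filter.Tendsto (fun t : ℝ => √t) (nhdsWithin 0 (Ioi 0)) (nhdsWithin 0 (Ioi 0)) := by
    refine tendsto_nhdsWithin_iff.2 ⟨?_, ?_⟩
    · have := (Real.continuous_sqrt.tendsto 0)
      rw [Real.sqrt_zero] at this
      exact this.mono_left nhdsWithin_le_nhds
    · filter_upwards [self_mem_nhdsWithin] with t ht
      exact Real.sqrt_pos.2 ht
  have hi0 : Filter.Tendsto (fun t : ℝ => q / √t) (nhdsWithin 0 (Ioi 0)) Filter.atTop := by
    simp only [div_eq_mul_inv]
    exact (tendsto_inv_nhdsGT_zero.comp hs0).const_mul_atTop hq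
  have hs0' : Filter.Tendsto (fun t : ℝ => p * √t) (nhdsWithin 0 (Ioi 0)) (nhds 0) := by
    have := (hs0.mono_right nhdsWithin_le_nhds).const_mul p
    simpa using this
  have hs1 : Filter.Tendsto (fun t : ℝ => p * √t) Filter.atTop Filter.atTop :=
    Real.tendsto_sqrt_atTop.const_mul_atTop hp
  have hi1 : Filter.Tendsto (fun t : ℝ => q / √t) Filter.atTop (nhds 0) :=
    Real.tendsto_sqrt_atTop.const_div_atTop q
  have main := aux_ftc
    (fun t => -(exp (-(2*p*q)) * Φ (q / √t - p * √t)) - exp (2*p*q) * Φ (q / √t + p * √t))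
    (fun t => q * (1 / (t * √t)) * exp (-(p^2 * t) - q^2 / t))
    (-(exp (-(2*p*q)) * (√π/2)) - exp (2*p*q) * (√π/2))
    (-(exp (-(2*p*q)) * (-(√π/2))) - exp (2*p*q) * (√π/2)) ?_ ?_ ?_ ?_
  · refine ⟨main.1, main.2.trans (by ring)⟩
  · intro t ht
    have ht : 0 < t := ht
    have hst : 0 < √t := Real.sqrt_pos.2 ht
    have hsq : √t ^ 2 = t := Real.sq_sqrt ht.le
    have d1 := Real.hasDerivAt_sqrt ht.ne'
    have d2 : HasDerivAt (fun t => q / √t) (-q / (2 * (t * √t))) t := by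
      have := d1.inv hst.ne' |>.const_mul q
      simp only [div_eq_mul_inv]
      refine this.congr_deriv ?_
      rw [hsq]; field_simp
    have d3 : HasDerivAt (fun t => p * √t) (p / (2 * √t)) t := by
      have := d1.const_mul p
      refine this.congr_deriv ?_
      ring
    have d4 := (((hΦ _).comp t (d2.sub d3)).const_mul (exp (-(2*p*q)))).neg.sub
      (((hΦ _).comp t (d2.add d3)).const_mul (exp (2*p*q)))
    refine d4.congr_deriv ?_
    have e1 : exp (-(2*p*q)) * exp (-(q / √t - p * √t)^2) = exp (-(p^2 * t) - q^2 / t) := by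
      rw [← Real.exp_add]; congr 1
      have : (q / √t - p * √t)^2 = q^2 / √t^2 - 2*p*q + p^2 * √t^2 := by field_simp; ring
      rw [this, hsq]; ring
    have e2 : exp (2*p*q) * exp (-(q / √t + p * √t)^2) = exp (-(p^2 * t) - q^2 / t) := by
      rw [← Real.exp_add]; congr 1
      have : (q / √t + p * √t)^2 = q^2 / √t^2 + 2*p*q + p^2 * √t^2 := by field_simp; ring
      rw [this, hsq]; ring
    simp only [Pi.sub_apply, Pi.add_apply]
    rw [← mul_assoc, ← mul_assoc (exp (2*p*q)), e1, e2]
    field_simp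
    ring
  · intro t ht
    have ht : 0 < t := ht
    positivity
  · have u1 : Filter.Tendsto (fun t : ℝ => q / √t - p * √t) (nhdsWithin 0 (Ioi 0)) Filter.atTop := by
      simp only [sub_eq_add_neg]
      exact hi0.atTop_add hs0'.neg
    have u2 : Filter.Tendsto (fun t : ℝ => q / √t + p * √t) (nhdsWithin 0 (Ioi 0)) Filter.atTop :=
      hi0.atTop_add hs0'
    exact (((hT.comp u1).const_mul _).neg).sub ((hT.comp u2).const_mul _)
  · have u1 : Filter.Tendsto (fun t : ℝ => q / √t - p * √t) Filter.atTop Filter.atBot := by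
      simp only [sub_eq_add_neg]
      exact hi1.add_atBot (Filter.tendsto_neg_atTop_atBot.comp hs1)
    have u2 : Filter.Tendsto (fun t : ℝ => q / √t + p * √t) Filter.atTop Filter.atTop :=
      hi1.add_atTop hs1
    exact (((hB.comp u1).const_mul _).neg).sub ((hT.comp u2).const_mul _)

theorem aux_sqrt_cosh (s : ℝ) (hs : 0 < s) : √(cosh s - 1) = √2 * sinh (s / 2) := by
  have h : cosh s - 1 = 2 * sinh (s/2)^2 := by
    have h1 := Real.cosh_two_mul (s/2)
    have h2 := Real.cosh_sq (s/2)
    rw [show 2 * (s/2) = s by ring] at h1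
    linarith
  rw [h, Real.sqrt_mul (by norm_num), Real.sqrt_sq (Real.sinh_nonneg_iff.2 (by linarith))]

theorem aux_int_le (a b : ℝ) (ha : 0 < a) (hab : a ≤ b) :
    IntegrableOn (fun s => (exp (-(a*s)) - exp (-(b*s))) / sinh (s/2)) (Ioi 0) := by
  have h1 : IntegrableOn (fun s => 2 * (b - a) * exp (-a*s)) (Ioi 0) :=
    (integrableOn_exp_mul_Ioi (a := -a) (by linarith) 0).const_mul _
  refine Integrable.mono' h1 ?_ ?_
  · exact (Measurable.aestronglyMeasurable (by fun_prop))
  · filter_upwards [ae_restrict_mem measurableSet_Ioi] with s hs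
    have hs : 0 < s := hs
    have h2 : s/2 ≤ sinh (s/2) := Real.self_le_sinh_iff.2 (by linarith)
    have h3 : exp (-(b*s)) ≤ exp (-(a*s)) := by
      apply Real.exp_le_exp.2; nlinarith
    rw [Real.norm_of_nonneg (div_nonneg (by linarith) (by linarith)), div_le_iff₀ (by linarith)]
    have h4 : exp (-(b*s)) = exp (-(a*s)) * exp (-((b-a)*s)) := by
      rw [← Real.exp_add]; congr 1; ring
    have h5 : 1 - (b-a)*s ≤ exp (-((b-a)*s)) := by
      have := Real.add_one_le_exp (-((b-a)*s)); linarith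
    have h6 := Real.exp_pos (-(a*s))
    rw [h4, show -a*s = -(a*s) by ring]
    calc exp (-(a*s)) - exp (-(a*s)) * exp (-((b-a)*s)) 
        ≤ exp (-(a*s)) * ((b-a)*s) := by nlinarith
      _ = 2 * (b-a) * exp (-(a*s)) * (s/2) := by ring
      _ ≤ _ := by
        apply mul_le_mul_of_nonneg_left h2
        have : 0 ≤ b - a := by linarith
        positivity

theorem aux_int_s4 (a b : ℝ) (ha : 0 < a) (hb : 0 < b) :
    IntegrableOn (fun s => (exp (-(a*s)) - exp (-(b*s))) / sinh (s/2)) (Ioi 0) := by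
  rcases le_total a b with h | h
  · exact aux_int_le a b ha h
  · refine (aux_int_le b a hb h).neg.congr (ae_of_all _ fun s => ?_)
    simp only [Pi.neg_apply]
    ring

theorem aux_fun (κ μ a s t : ℝ) (hκ : 0 < κ) (hs : 0 < s) (ht : 0 < t)
    (ha : a ^ 2 = 1 / 4 + μ ^ 2 / κ ^ 2) :
    (√2 / κ) * (4 * π * t) ^ (-(3 : ℝ) / 2) * exp (-κ ^ 2 * t / 4) *
      (s * exp (-s ^ 2 / (4 * κ ^ 2 * t)) / √(cosh s - 1)) * exp (-μ ^ 2 * t)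
    = (1 / (4 * π * √π * sinh (s/2))) *
      (s / (2 * κ) * (1 / (t * √t)) * exp (-((κ * a)^2 * t) - (s / (2 * κ))^2 / t)) := by
  have hsh : 0 < sinh (s/2) := Real.sinh_pos_iff.2 (by linarith)
  have hst : 0 < √t := Real.sqrt_pos.2 ht
  have hpi := Real.pi_pos
  have hsp : 0 < √π := Real.sqrt_pos.2 hpi
  have h2 : 0 < √(2:ℝ) := by positivity
  have e : exp (-((κ * a)^2 * t) - (s / (2 * κ))^2 / t)
     = exp (-κ ^ 2 * t / 4) * exp (-s ^ 2 / (4 * κ ^ 2 * t)) * exp (-μ ^ 2 * t) := by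
    rw [← Real.exp_add, ← Real.exp_add, mul_pow, ha]
    congr 1
    field_simp
    ring
  have hpow : (4 * π * t) ^ (-(3 : ℝ) / 2) = 1 / (8 * (π * √π) * (t * √t)) := by
    have h4 : (0:ℝ) < 4 * π * t := by positivity
    have : (4 * π * t) ^ (-(3 : ℝ) / 2) = 1 / ((4 * π * t) * √(4 * π * t)) := by
      rw [show (-(3:ℝ)/2) = -(1 + 1/2) by norm_num, Real.rpow_neg h4.le, Real.rpow_add h4,
        Real.rpow_one, ← Real.sqrt_eq_rpow, one_div]
    rw [this, Real.sqrt_mul (by positivity), Real.sqrt_mul (by norm_num),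
      show (4:ℝ) = 2^2 by norm_num, Real.sqrt_sq (by norm_num)]
    congr 1; ring
  rw [e, hpow, aux_sqrt_cosh s hs]
  field_simp
  ring

theorem aux_slice (κ μ ν a b s : ℝ) (hκ : 0 < κ) (hs : 0 < s) (ha : 0 < a) (hb : 0 < b)
    (ha2 : a ^ 2 = 1 / 4 + μ ^ 2 / κ ^ 2) (hb2 : b ^ 2 = 1 / 4 + ν ^ 2 / κ ^ 2) :
    IntegrableOn (fun t => (√2 / κ) * (4 * π * t) ^ (-(3 : ℝ) / 2) * exp (-κ ^ 2 * t / 4) *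
      (s * exp (-s ^ 2 / (4 * κ ^ 2 * t)) / √(cosh s - 1)) *
        (exp (-μ ^ 2 * t) - exp (-ν ^ 2 * t))) (Ioi 0) ∧
    ∫ t in Ioi (0:ℝ), (√2 / κ) * (4 * π * t) ^ (-(3 : ℝ) / 2) * exp (-κ ^ 2 * t / 4) *
      (s * exp (-s ^ 2 / (4 * κ ^ 2 * t)) / √(cosh s - 1)) *
        (exp (-μ ^ 2 * t) - exp (-ν ^ 2 * t))
      = 1 / (4 * π) * ((exp (-(a*s)) - exp (-(b*s))) / sinh (s/2)) := by
  have hq : 0 < s / (2 * κ) := by positivity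
  obtain ⟨i1, v1⟩ := aux_key (κ * a) (s / (2 * κ)) (by positivity) hq
  obtain ⟨i2, v2⟩ := aux_key (κ * b) (s / (2 * κ)) (by positivity) hq
  have heq : EqOn (fun t => (1 / (4 * π * √π * sinh (s/2))) *
      (s / (2 * κ) * (1 / (t * √t)) * exp (-((κ * a)^2 * t) - (s / (2 * κ))^2 / t)) -
      (1 / (4 * π * √π * sinh (s/2))) *
      (s / (2 * κ) * (1 / (t * √t)) * exp (-((κ * b)^2 * t) - (s / (2 * κ))^2 / t)))
      (fun t => (√2 / κ) * (4 * π * t) ^ (-(3 : ℝ) / 2) * exp (-κ ^ 2 * t / 4) *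
      (s * exp (-s ^ 2 / (4 * κ ^ 2 * t)) / √(cosh s - 1)) *
        (exp (-μ ^ 2 * t) - exp (-ν ^ 2 * t))) (Ioi 0) := by
    intro t ht
    simp only
    rw [mul_sub, aux_fun κ μ a s t hκ hs ht ha2, aux_fun κ ν b s t hκ hs ht hb2]
  constructor
  · exact IntegrableOn.congr_fun ((i1.const_mul _).sub (i2.const_mul _)) heq measurableSet_Ioi
  · rw [← setIntegral_congr_fun measurableSet_Ioi heq,
      integral_sub (i1.const_mul _) (i2.const_mul _), integral_const_mul, integral_const_mul,
      v1, v2]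
    have hsh : 0 < sinh (s/2) := Real.sinh_pos_iff.2 (by linarith)
    have hpi := Real.pi_pos
    have hsp : 0 < √π := Real.sqrt_pos.2 hpi
    rw [show 2 * (κ * a) * (s / (2 * κ)) = a * s by field_simp,
      show 2 * (κ * b) * (s / (2 * κ)) = b * s by field_simp]
    field_simp

theorem aux_norm (κ μ ν s : ℝ) (hκ : 0 < κ) (hs : 0 < s) (hμ : 0 < μ) (hν : 0 < ν) :
    ∫ t in Ioi (0:ℝ), ‖(√2 / κ) * (4 * π * t) ^ (-(3 : ℝ) / 2) * exp (-κ ^ 2 * t / 4) *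
      (s * exp (-s ^ 2 / (4 * κ ^ 2 * t)) / √(cosh s - 1)) *
        (exp (-μ ^ 2 * t) - exp (-ν ^ 2 * t))‖
    = ‖∫ t in Ioi (0:ℝ), (√2 / κ) * (4 * π * t) ^ (-(3 : ℝ) / 2) * exp (-κ ^ 2 * t / 4) *
      (s * exp (-s ^ 2 / (4 * κ ^ 2 * t)) / √(cosh s - 1)) *
        (exp (-μ ^ 2 * t) - exp (-ν ^ 2 * t))‖ := by
  have hD : ∀ t ∈ Ioi (0:ℝ), 0 ≤ (√2 / κ) * (4 * π * t) ^ (-(3 : ℝ) / 2) * exp (-κ ^ 2 * t / 4) *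
      (s * exp (-s ^ 2 / (4 * κ ^ 2 * t)) / √(cosh s - 1)) := by
    intro t ht
    have ht : 0 < t := ht
    positivity
  have key : ∀ F : ℝ → ℝ, (∀ t ∈ Ioi (0:ℝ), 0 ≤ F t) →
      ∫ t in Ioi (0:ℝ), ‖F t‖ = ‖∫ t in Ioi (0:ℝ), F t‖ := by
    intro F hF
    rw [Real.norm_of_nonneg (setIntegral_nonneg measurableSet_Ioi hF)]
    exact setIntegral_congr_fun measurableSet_Ioi fun t ht => Real.norm_of_nonneg (hF t ht)
  rcases le_total μ ν with h | h
  · apply key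
    intro t ht
    refine mul_nonneg (hD t ht) (sub_nonneg.2 (Real.exp_le_exp.2 ?_))
    have ht : 0 < t := ht
    have : μ^2 ≤ ν^2 := by gcongr
    nlinarith
  · have := key (fun t => -((√2 / κ) * (4 * π * t) ^ (-(3 : ℝ) / 2) * exp (-κ ^ 2 * t / 4) *
      (s * exp (-s ^ 2 / (4 * κ ^ 2 * t)) / √(cosh s - 1)) *
        (exp (-μ ^ 2 * t) - exp (-ν ^ 2 * t)))) ?_
    · simpa only [norm_neg, integral_neg] using this
    intro t ht
    rw [← mul_neg, neg_sub]
    refine mul_nonneg (hD t ht) (sub_nonneg.2 (Real.exp_le_exp.2 ?_))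
    have ht : 0 < t := ht
    have : ν^2 ≤ μ^2 := by gcongr
    nlinarith

/-- The diagonal entry of the principal matrix on the hyperbolic plane `ℍ²_κ` equals
the difference of digamma values in their integral representation: for `κ, μ, ν > 0`,
`∫₀^∞ K_t(0) (e^{-μ² t} - e^{-ν² t}) dt
  = (1/(2π)) ∫₀^∞ (e^{-t(1/2 + √(1/4 + μ²/κ²))} - e^{-t(1/2 + √(1/4 + ν²/κ²))})/(1 - e^{-t}) dt`,
where `K_t(0) = (√2/κ)(4π t)^{-3/2} e^{-κ² t/4} ∫₀^∞ s e^{-s²/(4κ² t)}/√(cosh s - 1) ds`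
is the diagonal heat kernel of `ℍ²_κ`. -/
theorem diag_principal_matrix_H2 (κ μ ν : ℝ) (hκ : 0 < κ) (hμ : 0 < μ) (hν : 0 < ν) :
    ∫ t in Ioi (0 : ℝ),
        ((Real.sqrt 2 / κ) * (4 * π * t) ^ (-(3 : ℝ) / 2) * Real.exp (-κ ^ 2 * t / 4) *
            ∫ s in Ioi (0 : ℝ),
              s * Real.exp (-s ^ 2 / (4 * κ ^ 2 * t)) / Real.sqrt (Real.cosh s - 1)) *
          (Real.exp (-μ ^ 2 * t) - Real.exp (-ν ^ 2 * t))
      = (1 / (2 * π)) *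
          ∫ t in Ioi (0 : ℝ),
            (Real.exp (-t * (1 / 2 + Real.sqrt (1 / 4 + μ ^ 2 / κ ^ 2))) -
              Real.exp (-t * (1 / 2 + Real.sqrt (1 / 4 + ν ^ 2 / κ ^ 2)))) /
              (1 - Real.exp (-t)) := by
  set a := √(1 / 4 + μ ^ 2 / κ ^ 2) with hadef
  set b := √(1 / 4 + ν ^ 2 / κ ^ 2) with hbdef
  have ha : 0 < a := Real.sqrt_pos.2 (by positivity)
  have hb : 0 < b := Real.sqrt_pos.2 (by positivity)
  have ha2 : a ^ 2 = 1 / 4 + μ ^ 2 / κ ^ 2 := Real.sq_sqrt (by positivity)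
  have hb2 : b ^ 2 = 1 / 4 + ν ^ 2 / κ ^ 2 := Real.sq_sqrt (by positivity)
  let f : ℝ → ℝ → ℝ := fun t s =>
    (√2 / κ) * (4 * π * t) ^ (-(3 : ℝ) / 2) * exp (-κ ^ 2 * t / 4) *
      (s * exp (-s ^ 2 / (4 * κ ^ 2 * t)) / √(cosh s - 1)) *
        (exp (-μ ^ 2 * t) - exp (-ν ^ 2 * t))
  have hprod : Integrable (Function.uncurry f)
      ((volume.restrict (Ioi (0:ℝ))).prod (volume.restrict (Ioi (0:ℝ)))) := by
    rw [integrable_prod_iff']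
    · constructor
      · filter_upwards [ae_restrict_mem measurableSet_Ioi] with s hs
        exact (aux_slice κ μ ν a b s hκ hs ha hb ha2 hb2).1
      · have hI := ((aux_int_s4 a b ha hb).const_mul (1 / (4 * π))).norm
        refine hI.congr ?_
        filter_upwards [ae_restrict_mem measurableSet_Ioi] with s hs
        rw [← (aux_slice κ μ ν a b s hκ hs ha hb ha2 hb2).2]
        exact (aux_norm κ μ ν s hκ hs hμ hν).symm
    · apply Measurable.aestronglyMeasurable
      simp only [f, Function.uncurry_def]
      fun_prop
  have hswap := integral_integral_swap hprod
  have hL : ∀ t : ℝ, ((√2 / κ) * (4 * π * t) ^ (-(3 : ℝ) / 2) * exp (-κ ^ 2 * t / 4) *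
            ∫ s in Ioi (0 : ℝ), s * exp (-s ^ 2 / (4 * κ ^ 2 * t)) / √(cosh s - 1)) *
          (exp (-μ ^ 2 * t) - exp (-ν ^ 2 * t)) = ∫ s in Ioi (0:ℝ), f t s := by
    intro t
    simp only [f]
    rw [integral_mul_const, integral_const_mul]
  simp only [hL]
  rw [hswap, ← integral_const_mul]
  refine setIntegral_congr_fun measurableSet_Ioi fun s hs => ?_
  have hs : 0 < s := hs
  simp only [f]
  rw [(aux_slice κ μ ν a b s hκ hs ha hb ha2 hb2).2]
  have hsh : 0 < sinh (s/2) := Real.sinh_pos_iff.2 (by linarith)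
  have hpi := Real.pi_pos
  have he := Real.exp_pos (-(s/2))
  have h1 : 1 - exp (-s) = 2 * exp (-(s/2)) * sinh (s/2) := by
    rw [Real.sinh_eq, show -s = -(s/2) + -(s/2) by ring, Real.exp_add]
    have : exp (-(s/2)) * exp (s/2) = 1 := by rw [← Real.exp_add]; simp
    linear_combination -this
  have h2 : ∀ c : ℝ, exp (-s * (1/2 + c)) = exp (-(s/2)) * exp (-(c*s)) := by
    intro c
    rw [← Real.exp_add]; congr 1; ring
  rw [h1, h2, h2]
  field_simp
  try ring
end

section
/- Let μ₁, μ₂, d > 0. Consider the characteristic equation (ν − μ₁)(ν − μ₂) = e^{−2 d ν}/d² for ν ∈ (0, ∞), which describes the bound states of two point δ-interactions in ℝ³ separated by distance d. If √(μ₁ μ₂) · d > 1, then this equation has exactly two solutions ν > 0; if √(μ₁ μ₂) · d ≤ 1, it has exactly one solution ν > 0. -/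
open Real Set

lemma key_step (a b d x y : ℝ) (hd : 0 < d) (hx : 0 ≤ x) (hxy : x < y) (hya : y < a) (hyb : y < b)
    (h : (x - a) * (x - b) ≤ Real.exp (-2 * d * x) / d ^ 2) :
    (y - a) * (y - b) < Real.exp (-2 * d * y) / d ^ 2 := by
  have hsq : ∀ z : ℝ, Real.exp (-2 * d * z) / d ^ 2 = (Real.exp (-d * z) / d) ^ 2 := by
    intro z
    rw [div_pow, ← Real.exp_nat_mul]
    congr 2
    push_cast
    ring
  rw [hsq] at h ⊢
  have hEF : Real.exp (-d * x) / d < Real.exp (-d * y) / d + (y - x) := by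
    have h1 : Real.exp (-d * y) = Real.exp (-d * x) * Real.exp (-d * (y - x)) := by
      rw [← Real.exp_add]; congr 1; ring
    have h2 : -d * (y - x) + 1 < Real.exp (-d * (y - x)) :=
      Real.add_one_lt_exp (by nlinarith [mul_pos hd (sub_pos.2 hxy)])
    have h3 : Real.exp (-d * x) ≤ 1 := Real.exp_le_one_iff.2 (by nlinarith [mul_nonneg hd.le hx])
    have h4 := Real.exp_pos (-d * x)
    have h5 : Real.exp (-d * x) < Real.exp (-d * y) + d * (y - x) := by
      rw [h1]
      nlinarith [mul_lt_mul_of_pos_left h2 h4, mul_nonneg (sub_nonneg.2 h3) (mul_pos hd (sub_pos.2 hxy)).le]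
    rw [div_lt_iff₀ hd, add_mul, div_mul_cancel₀ _ hd.ne']
    linarith
  have hE : 0 < Real.exp (-d * x) / d := by positivity
  have hF : 0 < Real.exp (-d * y) / d := by positivity
  generalize Real.exp (-d * x) / d = E at *
  generalize Real.exp (-d * y) / d = F at *
  by_contra! hc
  have hs : 2 * F ≤ (a - y) + (b - y) := by
    refine abs_le_of_sq_le_sq' ?_ (by linarith) |>.2
    nlinarith [sq_nonneg (a - b)]
  have h6 : E ^ 2 < (F + (y - x)) ^ 2 := by gcongr
  nlinarith [mul_le_mul_of_nonneg_left hs (sub_pos.2 hxy).le]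

lemma main_le (a b d : ℝ) (ha : 0 < a) (hd : 0 < d) (hab : a ≤ b) :
    (1 < a * b * d ^ 2 →
      {ν : ℝ | 0 < ν ∧ (ν - a) * (ν - b) = Real.exp (-2 * d * ν) / d ^ 2}.ncard = 2) ∧
    (a * b * d ^ 2 ≤ 1 →
      {ν : ℝ | 0 < ν ∧ (ν - a) * (ν - b) = Real.exp (-2 * d * ν) / d ^ 2}.ncard = 1) := by
  have hpos : ∀ z : ℝ, 0 < Real.exp (-2 * d * z) / d ^ 2 := fun z => by positivity
  have hcont : Continuous fun z : ℝ => (z - a) * (z - b) - Real.exp (-2 * d * z) / d ^ 2 := by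
    fun_prop
  have hd2 : 0 < d ^ 2 := by positivity
  have h0 : Real.exp (-2 * d * 0) / d ^ 2 = 1 / d ^ 2 := by simp
  -- the upper root
  obtain ⟨v, hv, hveq⟩ : ∃ v, b < v ∧ (v - a) * (v - b) = Real.exp (-2 * d * v) / d ^ 2 := by
    have hb1 : b ≤ b + 1 / d := by have : 0 < 1 / d := by positivity
                                   linarith
    have := intermediate_value_Icc hb1 hcont.continuousOn
    obtain ⟨v, hv, hv0⟩ := this (show (0:ℝ) ∈ _ from by
      constructor
      · have := hpos b
        simp only [sub_self, mul_zero]; linarith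
      · have h1 : Real.exp (-2 * d * (b + 1 / d)) ≤ 1 := by
          apply Real.exp_le_one_iff.2
          have : 0 ≤ d * (b + 1 / d) := mul_nonneg hd.le (by linarith)
          linarith
        have h2 : Real.exp (-2 * d * (b + 1 / d)) / d ^ 2 ≤ 1 / d ^ 2 := by gcongr
        have h3 : 1 / d ^ 2 = (1 / d) * (1 / d) := by field_simp
        have h4 : 0 < 1 / d := by positivity
        nlinarith [mul_nonneg (sub_nonneg.2 hab) h4.le])
    simp only at hv0
    refine ⟨v, lt_of_le_of_ne hv.1 ?_, by linarith⟩
    rintro rfl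
    have := hpos b
    simp at hv0
    have := hd.ne'
    tauto
  have huniq : ∀ w z, b < w → w < z → (w - a) * (w - b) = Real.exp (-2 * d * w) / d ^ 2 →
      (z - a) * (z - b) = Real.exp (-2 * d * z) / d ^ 2 → False := by
    intro w z hw hwz e1 e2
    have h1 : Real.exp (-2 * d * z) / d ^ 2 < Real.exp (-2 * d * w) / d ^ 2 := by
      apply div_lt_div_of_pos_right _ hd2
      apply Real.exp_lt_exp.2
      nlinarith
    have h2 : (w - a) * (w - b) < (z - a) * (z - b) := by
      apply mul_lt_mul'' <;> linarith
    linarith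
  have hup : ∀ w, b < w → (w - a) * (w - b) = Real.exp (-2 * d * w) / d ^ 2 → w = v := by
    intro w hw e
    rcases lt_trichotomy w v with h | h | h
    · exact (huniq w v hw h e hveq).elim
    · exact h
    · exact (huniq v w hv h hveq e).elim
  have hsplit : ∀ w, (w - a) * (w - b) = Real.exp (-2 * d * w) / d ^ 2 → w < a ∨ b < w := by
    intro w e
    by_contra! hc
    have := hpos w
    nlinarith [mul_nonneg (sub_nonneg.2 hc.1) (sub_nonneg.2 hc.2)]
  have hv0 : 0 < v := by linarith
  constructor
  · intro h
    obtain ⟨u, hu, hueq⟩ : ∃ u, (0 < u ∧ u < a) ∧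
        (u - a) * (u - b) = Real.exp (-2 * d * u) / d ^ 2 := by
      have := intermediate_value_Ioo' ha.le hcont.continuousOn
      obtain ⟨u, hu, hu0⟩ := this (show (0:ℝ) ∈ _ from by
        constructor
        · have := hpos a
          simp only [sub_self, zero_mul]; linarith
        · simp only [h0]
          have : 1 / d ^ 2 < a * b := by rwa [div_lt_iff₀ hd2]
          linarith)
      simp only at hu0
      exact ⟨u, hu, by linarith⟩
    rw [Set.ncard_eq_two]
    refine ⟨u, v, by linarith [hu.2] |> ne_of_lt, ?_⟩
    ext w
    simp only [mem_setOf_eq, mem_insert_iff, mem_singleton_iff]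
    constructor
    · rintro ⟨hw, e⟩
      rcases hsplit w e with h1 | h1
      · left
        rcases lt_trichotomy w u with h2 | h2 | h2
        · exact absurd hueq (key_step a b d w u hd hw.le h2 hu.2 (by linarith [hu.2]) e.le).ne
        · exact h2
        · exact absurd e (key_step a b d u w hd hu.1.le h2 h1 (by linarith) hueq.le).ne
      · exact Or.inr (hup w h1 e)
    · rintro (rfl | rfl)
      · exact ⟨hu.1, hueq⟩
      · exact ⟨hv0, hveq⟩
  · intro h
    rw [Set.ncard_eq_one]
    refine ⟨v, ?_⟩
    ext w
    simp only [mem_setOf_eq, mem_singleton_iff]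
    constructor
    · rintro ⟨hw, e⟩
      rcases hsplit w e with h1 | h1
      · refine absurd e (key_step a b d 0 w hd le_rfl hw h1 (by linarith) ?_).ne
        rw [h0, le_div_iff₀ hd2]
        linarith
      · exact hup w h1 e
    · rintro rfl
      exact ⟨hv0, hveq⟩

/-- Number of bound states of two point δ-interactions in ℝ³: for `μ₁, μ₂, d > 0`,
the characteristic equation `(ν - μ₁)(ν - μ₂) = e^{-2dν}/d²` on `(0, ∞)` has exactly
two solutions if `√(μ₁ μ₂) d > 1`, and exactly one solution if `√(μ₁ μ₂) d ≤ 1`. -/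
theorem two_delta_bound_states_R3 (μ₁ μ₂ d : ℝ) (hμ₁ : 0 < μ₁) (hμ₂ : 0 < μ₂) (hd : 0 < d) :
    (Real.sqrt (μ₁ * μ₂) * d > 1 →
      {ν : ℝ | 0 < ν ∧ (ν - μ₁) * (ν - μ₂) = Real.exp (-2 * d * ν) / d ^ 2}.ncard = 2) ∧
    (Real.sqrt (μ₁ * μ₂) * d ≤ 1 →
      {ν : ℝ | 0 < ν ∧ (ν - μ₁) * (ν - μ₂) = Real.exp (-2 * d * ν) / d ^ 2}.ncard = 1) := by
  have hm : 0 < μ₁ * μ₂ := mul_pos hμ₁ hμ₂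
  have hs : (Real.sqrt (μ₁ * μ₂) * d) ^ 2 = μ₁ * μ₂ * d ^ 2 := by
    rw [mul_pow, Real.sq_sqrt hm.le]
  have hn : 0 ≤ Real.sqrt (μ₁ * μ₂) * d := by positivity
  have key : (1 < μ₁ * μ₂ * d ^ 2 →
      {ν : ℝ | 0 < ν ∧ (ν - μ₁) * (ν - μ₂) = Real.exp (-2 * d * ν) / d ^ 2}.ncard = 2) ∧
    (μ₁ * μ₂ * d ^ 2 ≤ 1 →
      {ν : ℝ | 0 < ν ∧ (ν - μ₁) * (ν - μ₂) = Real.exp (-2 * d * ν) / d ^ 2}.ncard = 1) := by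
    rcases le_total μ₁ μ₂ with h | h
    · exact main_le μ₁ μ₂ d hμ₁ hd h
    · have := main_le μ₂ μ₁ d hμ₂ hd h
      simp only [mul_comm μ₂ μ₁, fun ν : ℝ => mul_comm (ν - μ₂) (ν - μ₁)] at this
      exact this
  constructor
  · intro h
    exact key.1 (by rw [← hs]; nlinarith)
  · intro h
    exact key.2 (by rw [← hs]; nlinarith)
end

section
/- Let μ₁, μ₂, d > 0 and suppose √(μ₁ μ₂) · d > 2. Then the characteristic equation log(ν/μ₁) · log(ν/μ₂) = K₀(ν d)², for ν ∈ (0, ∞), describing the bound states of two point δ-interactions in ℝ² separated by distance d, has exactly two solutions ν > 0. -/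
open Real MeasureTheory Set

/-- The modified Bessel function of the third kind of order zero, via its integral
representation `K₀(x) = ∫₁^∞ e^{-x t}/√(t² - 1) dt`. -/
noncomputable def besselK0 (x : ℝ) : ℝ :=
  ∫ t in Ioi (1 : ℝ), Real.exp (-x * t) / Real.sqrt (t ^ 2 - 1)

open Filter Topology

lemma aux_sqrt {t : ℝ} (ht : 1 < t) :
    0 < Real.sqrt (t ^ 2 - 1) ∧ Real.sqrt (t ^ 2 - 1) ^ 2 = t ^ 2 - 1 ∧ Real.sqrt (t ^ 2 - 1) < t := by
  have h : 0 < t ^ 2 - 1 := by nlinarith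
  have h1 := Real.sqrt_pos.2 h
  have h2 := Real.sq_sqrt h.le
  exact ⟨h1, h2, by nlinarith⟩

lemma aux_deriv_sqrt {t : ℝ} (ht : 1 < t) :
    HasDerivAt (fun t : ℝ => Real.sqrt (t ^ 2 - 1)) (t / Real.sqrt (t ^ 2 - 1)) t := by
  have h : t ^ 2 - 1 ≠ 0 := by nlinarith
  have h0 : HasDerivAt (fun t : ℝ => t ^ 2 - 1) (2 * t) t := by
    simpa using (hasDerivAt_pow 2 t).sub_const 1
  have := h0.sqrt h
  convert this using 1
  field_simp

lemma aux_r_lim : Tendsto (fun t : ℝ => t - Real.sqrt (t ^ 2 - 1)) atTop (𝓝 0) := by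
  refine squeeze_zero' (g := fun t : ℝ => t⁻¹) ?_ ?_ tendsto_inv_atTop_zero
  · filter_upwards [eventually_gt_atTop 1] with t ht
    linarith [(aux_sqrt ht).2.2]
  · filter_upwards [eventually_gt_atTop 1] with t ht
    obtain ⟨h1, h2, h3⟩ := aux_sqrt ht
    rw [le_inv_comm₀ (by linarith) (by linarith), ← one_div, le_div_iff₀ (by linarith)]
    nlinarith

lemma aux_exp_lim {x : ℝ} (hx : 0 < x) : Tendsto (fun t : ℝ => Real.exp (-x * t)) atTop (𝓝 0) := by
  refine Real.tendsto_exp_atBot.comp ?_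
  exact tendsto_id.const_mul_atTop_of_neg (by linarith)

noncomputable def auxG (x t : ℝ) : ℝ :=
  2 * Real.exp (-x / 2) * Real.exp (-x / 2 * (t - Real.sqrt (t ^ 2 - 1))) - Real.exp (-x * t)

noncomputable def auxG' (x t : ℝ) : ℝ :=
  2 * Real.exp (-x / 2) * (Real.exp (-x / 2 * (t - Real.sqrt (t ^ 2 - 1))) *
    (-x / 2 * (1 - t / Real.sqrt (t ^ 2 - 1)))) - Real.exp (-x * t) * (-x * 1)

lemma auxG_deriv (x : ℝ) {t : ℝ} (ht : 1 < t) : HasDerivAt (auxG x) (auxG' x t) t := by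
  unfold auxG auxG'
  exact ((((hasDerivAt_id t).sub (aux_deriv_sqrt ht)).const_mul (-x / 2)).exp.const_mul _).sub
    (((hasDerivAt_id t).const_mul (-x)).exp)

lemma auxG_ge {x : ℝ} (hx : 0 < x) {t : ℝ} (ht : 1 < t) :
    x * (t * Real.exp (-x * t) / Real.sqrt (t ^ 2 - 1)) ≤ auxG' x t := by
  obtain ⟨h1, h2, h3⟩ := aux_sqrt ht
  unfold auxG'
  set s := Real.sqrt (t ^ 2 - 1)
  have e1 : Real.exp (-x * t) ≤ Real.exp (-x / 2) * Real.exp (-x / 2 * (t - s)) := by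
    rw [← Real.exp_add]
    apply Real.exp_le_exp.2
    nlinarith [mul_pos hx (show 0 < t + s - 1 by linarith)]
  have e2 : 0 ≤ x * (t / s - 1) := by
    have : 1 ≤ t / s := by rw [le_div_iff₀ h1]; linarith
    exact mul_nonneg hx.le (by linarith)
  have := mul_le_mul_of_nonneg_left e1 e2
  have e3 : x * (t * Real.exp (-x * t) / s) = x * (t / s) * Real.exp (-x * t) := by ring
  rw [e3]
  nlinarith

lemma auxG_nonneg {x : ℝ} (hx : 0 < x) {t : ℝ} (ht : 1 < t) : 0 ≤ auxG' x t := by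
  refine le_trans ?_ (auxG_ge hx ht)
  have := (aux_sqrt ht).1
  positivity

lemma auxG_cont (x : ℝ) : Continuous (auxG x) := by
  unfold auxG; fun_prop

lemma auxG_lim {x : ℝ} (hx : 0 < x) : Tendsto (auxG x) atTop (𝓝 (2 * Real.exp (-x / 2))) := by
  unfold auxG
  have h1 : Tendsto (fun t : ℝ => Real.exp (-x / 2 * (t - Real.sqrt (t ^ 2 - 1)))) atTop (𝓝 1) := by
    have := (Real.continuous_exp.tendsto _).comp (aux_r_lim.const_mul (-x / 2))
    simpa [Function.comp_def] using this
  simpa using (h1.const_mul (2 * Real.exp (-x / 2))).sub (aux_exp_lim hx)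

lemma auxG_int {x : ℝ} (hx : 0 < x) : IntegrableOn (auxG' x) (Ioi 1) :=
  integrableOn_Ioi_deriv_of_nonneg (auxG_cont x).continuousWithinAt
    (fun _ ht => auxG_deriv x ht) (fun _ ht => auxG_nonneg hx ht) (auxG_lim hx)

lemma auxG_integral {x : ℝ} (hx : 0 < x) :
    ∫ t in Ioi (1:ℝ), auxG' x t = 2 * Real.exp (-x / 2) - Real.exp (-x) := by
  rw [integral_Ioi_of_hasDerivAt_of_nonneg (auxG_cont x).continuousWithinAt
    (fun _ ht => auxG_deriv x ht) (fun _ ht => auxG_nonneg hx ht) (auxG_lim hx)]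
  have : Real.exp (-x / 2) * Real.exp (-x / 2) = Real.exp (-x) := by
    rw [← Real.exp_add]; congr 1; ring
  simp [auxG]
  linarith

lemma auxJ_meas (x : ℝ) : Measurable (fun t : ℝ => t * Real.exp (-x * t) / Real.sqrt (t ^ 2 - 1)) := by
  fun_prop

lemma auxK_meas (x : ℝ) : Measurable (fun t : ℝ => Real.exp (-x * t) / Real.sqrt (t ^ 2 - 1)) := by
  fun_prop

lemma auxJ_int {x : ℝ} (hx : 0 < x) :
    IntegrableOn (fun t : ℝ => t * Real.exp (-x * t) / Real.sqrt (t ^ 2 - 1)) (Ioi 1) := by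
  refine Integrable.mono' ((auxG_int hx).const_mul x⁻¹) (auxJ_meas x).aestronglyMeasurable ?_
  refine (ae_restrict_mem measurableSet_Ioi).mono fun t ht => ?_
  have ht : 1 < t := ht
  have := (aux_sqrt ht).1
  rw [Real.norm_of_nonneg (by positivity), inv_mul_eq_div, le_div_iff₀ hx, mul_comm]
  exact auxG_ge hx ht

lemma auxK_int {x : ℝ} (hx : 0 < x) :
    IntegrableOn (fun t : ℝ => Real.exp (-x * t) / Real.sqrt (t ^ 2 - 1)) (Ioi 1) := by
  refine Integrable.mono' (auxJ_int hx) (auxK_meas x).aestronglyMeasurable ?_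
  refine (ae_restrict_mem measurableSet_Ioi).mono fun t ht => ?_
  have ht : 1 < t := ht
  have := (aux_sqrt ht).1
  rw [Real.norm_of_nonneg (by positivity)]
  gcongr
  nlinarith [Real.exp_pos (-x * t)]

noncomputable def auxJ (x : ℝ) : ℝ :=
  ∫ t in Ioi (1 : ℝ), t * Real.exp (-x * t) / Real.sqrt (t ^ 2 - 1)

lemma auxJ_nonneg (x : ℝ) : 0 ≤ auxJ x := by
  refine setIntegral_nonneg measurableSet_Ioi fun t ht => ?_
  have ht : 1 < t := ht
  positivity

lemma auxJ_lt {x : ℝ} (hx : 0 < x) : x * auxJ x < 1 := by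
  have h1 : x * auxJ x ≤ 2 * Real.exp (-x / 2) - Real.exp (-x) := by
    rw [← auxG_integral hx, auxJ, ← integral_const_mul]
    exact setIntegral_mono_on ((auxJ_int hx).const_mul x) (auxG_int hx) measurableSet_Ioi
      fun t ht => auxG_ge hx ht
  have h2 : Real.exp (-x / 2) * Real.exp (-x / 2) = Real.exp (-x) := by
    rw [← Real.exp_add]; congr 1; ring
  have h3 : Real.exp (-x / 2) < 1 := by
    rw [Real.exp_lt_one_iff]; linarith
  nlinarith

lemma K0_deriv {x : ℝ} (hx : 0 < x) : HasDerivAt besselK0 (-auxJ x) x := by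
  have := hasDerivAt_integral_of_dominated_loc_of_deriv_le (μ := volume.restrict (Ioi (1:ℝ)))
    (F := fun x t : ℝ => Real.exp (-x * t) / Real.sqrt (t ^ 2 - 1))
    (F' := fun x t : ℝ => -(t * Real.exp (-x * t) / Real.sqrt (t ^ 2 - 1)))
    (x₀ := x) (s := Ioi (x / 2))
    (bound := fun t => t * Real.exp (-(x / 2) * t) / Real.sqrt (t ^ 2 - 1))
    (Ioi_mem_nhds (by linarith))
    (Eventually.of_forall fun y => (auxK_meas y).aestronglyMeasurable)
    (auxK_int hx) (auxJ_meas x).neg.aestronglyMeasurable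
    ((ae_restrict_mem measurableSet_Ioi).mono fun t ht y hy => ?_)
    (auxJ_int (half_pos hx))
    ((ae_restrict_mem measurableSet_Ioi).mono fun t ht y hy => ?_)
  · have h := this.2
    rw [integral_neg] at h
    exact h
  · have ht : 1 < t := ht
    have hy : x / 2 < y := hy
    rw [norm_neg, Real.norm_of_nonneg (by positivity)]
    gcongr
  · have h0 : HasDerivAt (fun y : ℝ => -y * t) (-1 * t) y := (hasDerivAt_neg y).mul_const t
    have h := h0.exp.div_const (Real.sqrt (t ^ 2 - 1))
    refine h.congr_deriv ?_
    ring

lemma K0_cont : ContinuousOn besselK0 (Ioi 0) := fun _ hx =>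
  (K0_deriv hx).continuousAt.continuousWithinAt

lemma K0_anti : AntitoneOn besselK0 (Ioi 0) := by
  refine antitoneOn_of_deriv_nonpos (convex_Ioi 0) K0_cont ?_ ?_
  · intro x hx
    rw [interior_Ioi] at hx
    exact (K0_deriv hx).differentiableAt.differentiableWithinAt
  · intro x hx
    rw [interior_Ioi] at hx
    rw [(K0_deriv hx).deriv]
    linarith [auxJ_nonneg x]

lemma K0_log_mono : StrictMonoOn (fun x => besselK0 x + Real.log x) (Ioi 0) := by
  have hD : ∀ x : ℝ, 0 < x → HasDerivAt (fun x => besselK0 x + Real.log x) (-auxJ x + x⁻¹) x :=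
    fun x hx => (K0_deriv hx).add (Real.hasDerivAt_log hx.ne')
  refine strictMonoOn_of_deriv_pos (convex_Ioi 0) ?_ ?_
  · exact fun x hx => (hD x hx).continuousAt.continuousWithinAt
  · intro x hx
    rw [interior_Ioi] at hx
    rw [(hD x hx).deriv]
    have hx : 0 < x := hx
    have h1 := auxJ_lt hx
    have : auxJ x < x⁻¹ := by
      rw [← one_div, lt_div_iff₀ hx]; linarith
    linarith

lemma K0_pos {x : ℝ} (hx : 0 < x) : 0 < besselK0 x := by
  unfold besselK0
  rw [setIntegral_pos_iff_support_of_nonneg_ae _ (auxK_int hx)]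
  · have : Function.support (fun t : ℝ => Real.exp (-x * t) / Real.sqrt (t ^ 2 - 1)) ∩ Ioi 1
        = Ioi 1 := by
      refine inter_eq_right.2 fun t ht => ?_
      have := (aux_sqrt ht).1
      rw [Function.mem_support]
      positivity
    rw [this]
    simp
  · exact Eventually.of_forall fun t => by
      simp only [Pi.zero_apply]
      positivity

lemma K0_one : besselK0 1 ≤ Real.log 2 := by
  have hcont : Continuous (fun t : ℝ => Real.arctan (Real.sqrt (t ^ 2 - 1))) := by fun_prop
  have hder : ∀ t ∈ Ioi (1:ℝ), HasDerivAt (fun t : ℝ => Real.arctan (Real.sqrt (t ^ 2 - 1)))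
      (1 / (t * Real.sqrt (t ^ 2 - 1))) t := by
    intro t ht
    obtain ⟨h1, h2, h3⟩ := aux_sqrt ht
    have := (aux_deriv_sqrt ht).arctan
    convert this using 1
    rw [h2]
    have : t ≠ 0 := by linarith
    field_simp
    ring
  have hpos : ∀ t ∈ Ioi (1:ℝ), 0 ≤ 1 / (t * Real.sqrt (t ^ 2 - 1)) := by
    intro t ht
    have ht : 1 < t := ht
    positivity
  have hlim : Tendsto (fun t : ℝ => Real.arctan (Real.sqrt (t ^ 2 - 1))) atTop (𝓝 (π / 2)) := by
    refine (tendsto_nhds_of_tendsto_nhdsWithin Real.tendsto_arctan_atTop).comp ?_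
    refine Real.tendsto_sqrt_atTop.comp ?_
    exact tendsto_atTop_add_const_right _ _ (tendsto_pow_atTop two_ne_zero)
  have hI := integrableOn_Ioi_deriv_of_nonneg hcont.continuousWithinAt hder hpos hlim
  have hV := integral_Ioi_of_hasDerivAt_of_nonneg hcont.continuousWithinAt hder hpos hlim
  have h1 : besselK0 1 ≤ Real.exp (-1) * (π / 2) := by
    have : Real.exp (-1) * (π / 2) =
        ∫ t in Ioi (1:ℝ), Real.exp (-1) * (1 / (t * Real.sqrt (t ^ 2 - 1))) := by
      rw [integral_const_mul, hV]; simp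
    rw [this]
    refine setIntegral_mono_on (auxK_int one_pos) (hI.const_mul _) measurableSet_Ioi ?_
    intro t ht
    have ht : 1 < t := ht
    obtain ⟨h1, h2, h3⟩ := aux_sqrt ht
    have e : Real.exp (-1 * t) * t ≤ Real.exp (-1) := by
      have h4 : t ≤ Real.exp (t - 1) := by linarith [Real.add_one_le_exp (t - 1)]
      calc Real.exp (-1 * t) * t ≤ Real.exp (-1 * t) * Real.exp (t - 1) := by gcongr
        _ = Real.exp (-1) := by rw [← Real.exp_add]; congr 1; ring
    rw [mul_one_div, ← div_div]
    gcongr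
    rwa [le_div_iff₀ (by linarith)]
  refine h1.trans ?_
  rw [Real.exp_neg, inv_mul_le_iff₀ (Real.exp_pos 1)]
  have := Real.exp_one_gt_d9
  have := Real.log_two_gt_d9
  have := Real.pi_lt_d2
  nlinarith

lemma K0_le_log {x : ℝ} (hx : 0 < x) (hx1 : x ≤ 1) : besselK0 x ≤ Real.log 2 - Real.log x := by
  have := K0_log_mono.monotoneOn (show x ∈ Ioi (0:ℝ) from hx) (show (1:ℝ) ∈ Ioi (0:ℝ) from mem_Ioi.2 one_pos) hx1
  simp only [Real.log_one] at this
  linarith [K0_one]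

lemma main_aux (μ₁ μ₂ d : ℝ) (hμ₁ : 0 < μ₁) (hμ₂ : 0 < μ₂) (hd : 0 < d) (hle : μ₁ ≤ μ₂)
    (h : Real.sqrt (μ₁ * μ₂) * d > 2) :
    {ν : ℝ | 0 < ν ∧ Real.log (ν / μ₁) * Real.log (ν / μ₂) = besselK0 (ν * d) ^ 2}.ncard = 2 := by
  set a := Real.log μ₁ with ha
  set b := Real.log μ₂ with hb
  have hab : a ≤ b := Real.log_le_log hμ₁ hle
  have hset : {ν : ℝ | 0 < ν ∧ Real.log (ν / μ₁) * Real.log (ν / μ₂) = besselK0 (ν * d) ^ 2}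
      = {ν : ℝ | 0 < ν ∧ (Real.log ν - a) * (Real.log ν - b) = besselK0 (ν * d) ^ 2} := by
    ext ν
    simp only [mem_ofPred_eq]
    refine and_congr_right fun hν => ?_
    rw [Real.log_div hν.ne' hμ₁.ne', Real.log_div hν.ne' hμ₂.ne']
  rw [hset]
  have hm : Real.log 2 < (a + b) / 2 + Real.log d := by
    have := Real.log_lt_log two_pos h
    rwa [Real.log_mul (by positivity) hd.ne', Real.log_sqrt (by positivity),
      Real.log_mul hμ₁.ne' hμ₂.ne'] at this
  set ε := (a + b) / 2 + Real.log d - Real.log 2 with hε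
  have hε0 : 0 < ε := by linarith
  have hcont : ContinuousOn
      (fun ν => (Real.log ν - a) * (Real.log ν - b) - besselK0 (ν * d) ^ 2) (Ioi 0) := by
    have hl : ContinuousOn Real.log (Ioi 0) :=
      Real.continuousOn_log.mono fun x hx => ne_of_gt hx
    have hk : ContinuousOn (fun ν => besselK0 (ν * d)) (Ioi 0) :=
      K0_cont.comp (by fun_prop) fun x hx => mul_pos hx hd
    exact ((hl.sub continuousOn_const).mul (hl.sub continuousOn_const)).sub (hk.pow 2)
  -- lower solution
  obtain ⟨ν₁, hν₁0, hν₁a, hν₁⟩ : ∃ ν, 0 < ν ∧ ν ≤ μ₁ ∧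
      (Real.log ν - a) * (Real.log ν - b) - besselK0 (ν * d) ^ 2 = 0 := by
    obtain ⟨u, hu1, hu2, hu3⟩ : ∃ u : ℝ, u ≤ a ∧ u ≤ - Real.log d ∧
        ε ^ 2 + ((b - a) / 2) ^ 2 ≤ 2 * ε * ((a + b) / 2 - u) := by
      refine ⟨min (min a (-Real.log d)) ((a + b) / 2 - (ε ^ 2 + ((b - a) / 2) ^ 2) / (2 * ε)),
        (min_le_left _ _).trans (min_le_left _ _), (min_le_left _ _).trans (min_le_right _ _), ?_⟩
      have := min_le_right (min a (-Real.log d)) ((a + b) / 2 - (ε ^ 2 + ((b - a) / 2) ^ 2) / (2 * ε))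
      rw [mul_comm, ← div_le_iff₀ (by linarith)]
      linarith
    have hu0 := Real.exp_pos u
    have huμ : Real.exp u ≤ μ₁ := by
      rw [← Real.exp_log hμ₁]; exact Real.exp_le_exp.2 hu1
    have hud : Real.log (Real.exp u * d) = u + Real.log d := by
      rw [Real.log_mul hu0.ne' hd.ne', Real.log_exp]
    have hx1 : Real.exp u * d ≤ 1 := by
      rw [← Real.log_nonpos_iff (by positivity), hud]; linarith
    have hK := K0_le_log (mul_pos hu0 hd) hx1
    rw [hud] at hK
    have hKp := K0_pos (mul_pos hu0 hd)
    have hL : 0 ≤ (Real.log (Real.exp u) - a) * (Real.log (Real.exp u) - b)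
        - besselK0 (Real.exp u * d) ^ 2 := by
      rw [Real.log_exp]
      have hK2 : besselK0 (Real.exp u * d) ≤ (a + b) / 2 - u - ε := by rw [hε]; linarith
      have := pow_le_pow_left₀ hKp.le hK2 2
      nlinarith
    have hR : (Real.log μ₁ - a) * (Real.log μ₁ - b) - besselK0 (μ₁ * d) ^ 2 ≤ 0 := by
      rw [← ha]; nlinarith [sq_nonneg (besselK0 (μ₁ * d))]
    obtain ⟨ν, hν, hν'⟩ := intermediate_value_Icc' huμ
      (hcont.mono fun x hx => lt_of_lt_of_le hu0 hx.1) ⟨hR, hL⟩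
    exact ⟨ν, hu0.trans_le hν.1, hν.2, hν'⟩
  -- upper solution
  obtain ⟨ν₂, hν₂a, hν₂⟩ : ∃ ν, μ₂ ≤ ν ∧
      (Real.log ν - a) * (Real.log ν - b) - besselK0 (ν * d) ^ 2 = 0 := by
    have hc := K0_pos (mul_pos hμ₂ hd)
    set c := besselK0 (μ₂ * d)
    have hN : μ₂ ≤ μ₂ * Real.exp c := by
      nlinarith [Real.add_one_le_exp c]
    have hlog : Real.log (μ₂ * Real.exp c) = b + c := by
      rw [Real.log_mul hμ₂.ne' (Real.exp_pos c).ne', Real.log_exp]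
    have hL : (Real.log μ₂ - a) * (Real.log μ₂ - b) - besselK0 (μ₂ * d) ^ 2 ≤ 0 := by
      rw [← hb]; nlinarith [sq_nonneg (besselK0 (μ₂ * d))]
    have hR : 0 ≤ (Real.log (μ₂ * Real.exp c) - a) * (Real.log (μ₂ * Real.exp c) - b)
        - besselK0 (μ₂ * Real.exp c * d) ^ 2 := by
      have hp : 0 < μ₂ * Real.exp c * d := by positivity
      have h1 : besselK0 (μ₂ * Real.exp c * d) ≤ c :=
        K0_anti (show μ₂ * d ∈ Ioi (0:ℝ) from mul_pos hμ₂ hd) hp (by gcongr)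
      have h2 := pow_le_pow_left₀ (K0_pos hp).le h1 2
      rw [hlog]
      nlinarith
    obtain ⟨ν, hν, hν'⟩ := intermediate_value_Icc hN
      (hcont.mono fun x hx => lt_of_lt_of_le hμ₂ hx.1) ⟨hL, hR⟩
    exact ⟨ν, hν.1, hν'⟩
  have hν₂0 : 0 < ν₂ := hμ₂.trans_le hν₂a
  -- location
  have hloc : ∀ ν, 0 < ν → (Real.log ν - a) * (Real.log ν - b) - besselK0 (ν * d) ^ 2 = 0 →
      Real.log ν < a ∨ b < Real.log ν := by
    intro ν hν he
    by_contra! hcon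
    have := pow_pos (K0_pos (mul_pos hν hd)) 2
    nlinarith [mul_nonneg (sub_nonneg.2 hcon.1) (sub_nonneg.2 hcon.2)]
  -- uniqueness below
  have hlow : ∀ ν ν', 0 < ν → ν < ν' → Real.log ν' < a →
      (Real.log ν - a) * (Real.log ν - b) - besselK0 (ν * d) ^ 2 = 0 →
      (Real.log ν' - a) * (Real.log ν' - b) - besselK0 (ν' * d) ^ 2 = 0 → False := by
    intro ν ν' hν hlt hν' e e'
    have hν'0 := hν.trans hlt
    have hmono := K0_log_mono (show ν * d ∈ Ioi (0:ℝ) from mul_pos hν hd)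
      (show ν' * d ∈ Ioi (0:ℝ) from mul_pos hν'0 hd) (by gcongr)
    simp only [Real.log_mul hν.ne' hd.ne', Real.log_mul hν'0.ne' hd.ne'] at hmono
    have hk := K0_pos (mul_pos hν hd)
    have hk' := K0_pos (mul_pos hν'0 hd)
    have hul := Real.log_lt_log hν hlt
    generalize besselK0 (ν * d) = k at *
    generalize besselK0 (ν' * d) = k' at *
    generalize Real.log ν = u at *
    generalize Real.log ν' = u' at *
    have h1 : k ^ 2 < (k' + (u' - u)) ^ 2 := pow_lt_pow_left₀ (by linarith) hk.le two_ne_zero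
    have h2 : (u' - u) * ((a - u') + (b - u')) < (u' - u) * (2 * k') := by nlinarith
    have h3 := lt_of_mul_lt_mul_left h2 (by linarith)
    have h4 := pow_lt_pow_left₀ h3 (by linarith) two_ne_zero
    nlinarith [sq_nonneg (a - b)]
  have hup : ∀ ν ν', 0 < ν → ν < ν' → b < Real.log ν →
      (Real.log ν - a) * (Real.log ν - b) - besselK0 (ν * d) ^ 2 = 0 →
      (Real.log ν' - a) * (Real.log ν' - b) - besselK0 (ν' * d) ^ 2 = 0 → False := by
    intro ν ν' hν hlt hb' e e'
    have hν'0 := hν.trans hlt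
    have h1 := K0_anti (show ν * d ∈ Ioi (0:ℝ) from mul_pos hν hd)
      (show ν' * d ∈ Ioi (0:ℝ) from mul_pos hν'0 hd) (by gcongr)
    have h2 := pow_le_pow_left₀ (K0_pos (mul_pos hν'0 hd)).le h1 2
    have hul := Real.log_lt_log hν hlt
    have h5 : (Real.log ν - a) * (Real.log ν - b) < (Real.log ν' - a) * (Real.log ν' - b) :=
      mul_lt_mul'' (by linarith) (by linarith) (by linarith) (by linarith)
    linarith
  have hl1 : Real.log ν₁ < a := by
    rcases hloc ν₁ hν₁0 hν₁ with h | h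
    · exact h
    · have := Real.log_le_log hν₁0 hν₁a
      linarith
  have hl2 : b < Real.log ν₂ := by
    rcases hloc ν₂ hν₂0 hν₂ with h | h
    · have := Real.log_le_log hμ₂ hν₂a
      linarith
    · exact h
  have hne : ν₁ ≠ ν₂ := by
    rintro rfl
    linarith
  refine Eq.trans (congrArg Set.ncard ?_) (Set.ncard_pair hne)
  ext ν
  simp only [mem_ofPred_eq, mem_insert_iff, mem_singleton_iff]
  constructor
  · rintro ⟨hν, he⟩
    have he := sub_eq_zero.2 he
    rcases hloc ν hν he with hh | hh
    · left
      rcases lt_trichotomy ν ν₁ with hlt | heq | hlt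
      · exact (hlow _ _ hν hlt hl1 he hν₁).elim
      · exact heq
      · exact (hlow _ _ hν₁0 hlt hh hν₁ he).elim
    · right
      rcases lt_trichotomy ν ν₂ with hlt | heq | hlt
      · exact (hup _ _ hν hlt hh he hν₂).elim
      · exact heq
      · exact (hup _ _ hν₂0 hlt hl2 hν₂ he).elim
  · rintro (rfl | rfl)
    · exact ⟨hν₁0, sub_eq_zero.1 hν₁⟩
    · exact ⟨hν₂0, sub_eq_zero.1 hν₂⟩

theorem two_delta_bound_states_R2 (μ₁ μ₂ d : ℝ) (hμ₁ : 0 < μ₁) (hμ₂ : 0 < μ₂) (hd : 0 < d)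
    (h : Real.sqrt (μ₁ * μ₂) * d > 2) :
    {ν : ℝ | 0 < ν ∧ Real.log (ν / μ₁) * Real.log (ν / μ₂) = besselK0 (ν * d) ^ 2}.ncard = 2 := by
  rcases le_total μ₁ μ₂ with hle | hle
  · exact main_aux μ₁ μ₂ d hμ₁ hμ₂ hd hle h
  · rw [mul_comm μ₁ μ₂] at h
    have := main_aux μ₂ μ₁ d hμ₂ hμ₁ hd hle h
    refine Eq.trans (congrArg Set.ncard ?_) this
    ext ν
    simp only [mem_ofPred_eq]
    rw [mul_comm (Real.log (ν / μ₁))]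
end

section
/- Let λ₁, λ₂, d > 0. Consider the characteristic equation (1/λ₁ − 1/(2ν)) (1/λ₂ − 1/(2ν)) = e^{−2 d ν}/(4 ν²) for ν ∈ (0, ∞), which describes the bound states of two point δ-interactions in ℝ¹ of strengths λ₁, λ₂ separated by distance d. If d > 1/λ₁ + 1/λ₂, this equation has exactly two solutions ν > 0; otherwise it has exactly one solution ν > 0. -/
open Real Set

lemma log_aux (u t : ℝ) (hu : 0 < u) (hu1 : u < 1) (ht : 0 < t) (ht1 : t < 1) :
    t * Real.log u < Real.log (1 - t + t * u) := by
  have h := strictConcaveOn_log_Ioi.2 (show (1:ℝ) ∈ Ioi 0 by simp)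
    (show u ∈ Ioi (0:ℝ) from hu) hu1.ne' (show 0 < 1 - t by linarith) ht (by ring)
  simpa using h

/-- Logarithmic form of the equation below `1/q`. -/
lemma log_form (p q D x : ℝ) (hp : 0 < 1 - p * x) (hq : 0 < 1 - q * x)
    (h : (p * x - 1) * (q * x - 1) = Real.exp (-D * x)) :
    Real.log (1 - p * x) + Real.log (1 - q * x) + D * x = 0 := by
  rw [← Real.log_mul hp.ne' hq.ne',
    show (1 - p * x) * (1 - q * x) = (p * x - 1) * (q * x - 1) by ring, h, Real.log_exp]
  ring

lemma low_lt (p q D x y : ℝ) (hp : 0 < p) (hq : 0 < q) (hx : 0 < x) (hxy : x < y)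
    (hpy : p * y < 1) (hqy : q * y < 1)
    (h1 : (p * x - 1) * (q * x - 1) = Real.exp (-D * x))
    (h2 : (p * y - 1) * (q * y - 1) = Real.exp (-D * y)) : False := by
  have hy : 0 < y := hx.trans hxy
  have hpx : p * x < p * y := by gcongr
  have hqx : q * x < q * y := by gcongr
  have e1 := log_form p q D x (by linarith) (by linarith) h1
  have e2 := log_form p q D y (by linarith) (by linarith) h2
  have ht : 0 < x / y := by positivity
  have ht1 : x / y < 1 := by rwa [div_lt_one hy]
  have hpy0 : 0 < p * y := by positivity
  have hqy0 : 0 < q * y := by positivity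
  have a1 := log_aux (1 - p * y) (x / y) (by linarith) (by linarith) ht ht1
  have a2 := log_aux (1 - q * y) (x / y) (by linarith) (by linarith) ht ht1
  have c1 : 1 - x / y + x / y * (1 - p * y) = 1 - p * x := by field_simp; ring
  have c2 : 1 - x / y + x / y * (1 - q * y) = 1 - q * x := by field_simp; ring
  have c3 : x / y * (D * y) = D * x := by field_simp
  rw [c1] at a1
  rw [c2] at a2
  have : x / y * (Real.log (1 - p * y) + Real.log (1 - q * y) + D * y) = 0 := by
    rw [e2, mul_zero]
  nlinarith

lemma low_none (p q D x : ℝ) (hp : 0 < p) (hq : 0 < q) (hx : 0 < x) (hD : D ≤ p + q)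
    (hpx : p * x < 1) (hqx : q * x < 1)
    (h1 : (p * x - 1) * (q * x - 1) = Real.exp (-D * x)) : False := by
  have e1 := log_form p q D x (by linarith) (by linarith) h1
  have hp0 : 0 < p * x := by positivity
  have hq0 : 0 < q * x := by positivity
  have b1 := Real.log_lt_sub_one_of_pos (x := 1 - p * x) (by linarith) (by linarith)
  have b2 := Real.log_lt_sub_one_of_pos (x := 1 - q * x) (by linarith) (by linarith)
  have : D * x ≤ (p + q) * x := by gcongr
  nlinarith

lemma low_exists (p q D : ℝ) (hp : 0 < p) (hpq : p ≤ q) (hD : p + q < D) :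
    ∃ x, 0 < x ∧ q * x < 1 ∧ (p * x - 1) * (q * x - 1) = Real.exp (-D * x) := by
  have hq : 0 < q := by linarith
  have hs : 0 < p + q := by linarith
  have hD0 : 0 < D := by linarith
  obtain ⟨x, hx⟩ : ∃ x, x = (D - (p + q)) / (2 * (p + q) * D) := ⟨_, rfl⟩
  have hx0 : 0 < x := by rw [hx]; apply div_pos <;> [linarith; positivity]
  have hxe : 2 * (p + q) * D * x = D - (p + q) := by rw [hx]; field_simp
  have hsx : (p + q) * x < 1 := by
    by_contra hc
    push Not at hc
    nlinarith
  have hqx : q * x < 1 := by nlinarith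
  have hpos : Real.exp (-D * x) ≤ (p * x - 1) * (q * x - 1) := by
    have h1 : 1 + D * x ≤ Real.exp (D * x) := by linarith [Real.add_one_le_exp (D * x)]
    have h2 : Real.exp (-D * x) * Real.exp (D * x) = 1 := by
      rw [← Real.exp_add]; simp
    have hDx : 0 < D * x := by positivity
    have h3 : Real.exp (-D * x) * (1 + D * x) ≤ 1 := by
      exact (mul_le_mul_of_nonneg_left h1 (Real.exp_pos _).le).trans h2.le
    have h4 : 1 ≤ (1 - (p + q) * x) * (1 + D * x) := by
      have : (p + q) * D * x * x = (D - (p + q)) / 2 * x := by rw [← hxe]; ring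
      have : 0 < (D - (p + q)) * x := mul_pos (by linarith) hx0
      nlinarith
    have h5 : (1 - (p + q) * x) ≤ (p * x - 1) * (q * x - 1) := by
      have : 0 < p * x * (q * x) := by positivity
      nlinarith
    have h6 : Real.exp (-D * x) * (1 + D * x) ≤ (1 - (p + q) * x) * (1 + D * x) := h3.trans h4
    exact (le_of_mul_le_mul_right h6 (by linarith)).trans h5
  have hxq : x ≤ 1 / q := by rw [le_div_iff₀ hq]; linarith
  have hc : ContinuousOn (fun z : ℝ => (p * z - 1) * (q * z - 1) - Real.exp (-D * z))
      (Icc x (1 / q)) := by fun_prop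
  have hz : q * (1 / q) = 1 := by field_simp
  obtain ⟨z, hz1, hz2⟩ := intermediate_value_Icc' hxq hc (show (0:ℝ) ∈ _ from
    ⟨by simp only [hz]; have := Real.exp_pos (-D * (1 / q)); linarith, by linarith⟩)
  simp only at hz2
  refine ⟨z, by linarith [hz1.1], ?_, by linarith⟩
  have hle : q * z ≤ 1 := by rw [← hz]; gcongr; exact hz1.2
  rcases hle.lt_or_eq with h | h
  · exact h
  · rw [h] at hz2
    have := Real.exp_pos (-D * z)
    linarith

lemma high_exists (p q D : ℝ) (hp : 0 < p) (hpq : p ≤ q) (hD : 0 < D) :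
    ∃ x, 0 < x ∧ 1 < p * x ∧ (p * x - 1) * (q * x - 1) = Real.exp (-D * x) := by
  have hq : 0 < q := by linarith
  have hc : ContinuousOn (fun z : ℝ => (p * z - 1) * (q * z - 1) - Real.exp (-D * z))
      (Icc (1 / p) (2 / p)) := by fun_prop
  have hz : p * (1 / p) = 1 := by field_simp
  have hw : p * (2 / p) = 2 := by field_simp
  have hw2 : 2 ≤ q * (2 / p) := hw.symm.le.trans (by gcongr)
  have he : Real.exp (-D * (2 / p)) ≤ 1 := by
    rw [Real.exp_le_one_iff]
    have : 0 < D * (2 / p) := by positivity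
    linarith
  obtain ⟨z, hz1, hz2⟩ := intermediate_value_Icc (by gcongr; norm_num) hc (show (0:ℝ) ∈ _ from
    ⟨by simp only [hz]; have := Real.exp_pos (-D * (1 / p)); linarith,
     by simp only [hw]; linarith⟩)
  simp only at hz2
  have hp1 : 0 < 1 / p := by positivity
  refine ⟨z, by linarith [hz1.1], ?_, by linarith⟩
  have hle : 1 ≤ p * z := by rw [← hz]; gcongr; exact hz1.1
  rcases hle.lt_or_eq with h | h
  · exact h
  · rw [← h] at hz2
    have := Real.exp_pos (-D * z)
    linarith

lemma high_lt (p q D x y : ℝ) (hp : 0 < p) (hpq : p ≤ q) (hD : 0 < D) (hx : 0 < x) (hxy : x < y)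
    (hpx : 1 < p * x)
    (h1 : (p * x - 1) * (q * x - 1) = Real.exp (-D * x))
    (h2 : (p * y - 1) * (q * y - 1) = Real.exp (-D * y)) : False := by
  have hq : 0 < q := by linarith
  have a1 : p * x < p * y := by gcongr
  have a2 : q * x < q * y := by gcongr
  have a3 : p * x ≤ q * x := by gcongr
  have a4 : Real.exp (-D * y) < Real.exp (-D * x) := by
    apply Real.exp_lt_exp.2; nlinarith
  have : (p * x - 1) * (q * x - 1) < (p * y - 1) * (q * y - 1) := by
    apply mul_lt_mul'' <;> linarith
  linarith

lemma cases_sol (p q D x : ℝ) (hpq : p ≤ q) (hx : 0 < x)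
    (h1 : (p * x - 1) * (q * x - 1) = Real.exp (-D * x)) : q * x < 1 ∨ 1 < p * x := by
  by_contra hc
  push Not at hc
  have := Real.exp_pos (-D * x)
  nlinarith [mul_nonneg (sub_nonneg.2 hc.1) (sub_nonneg.2 hc.2)]

lemma core (p q D : ℝ) (hp : 0 < p) (hpq : p ≤ q) (hD : 0 < D) :
    (D > p + q →
      {x : ℝ | 0 < x ∧ (p * x - 1) * (q * x - 1) = Real.exp (-D * x)}.ncard = 2) ∧
    (D ≤ p + q →
      {x : ℝ | 0 < x ∧ (p * x - 1) * (q * x - 1) = Real.exp (-D * x)}.ncard = 1) := by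
  have hq : 0 < q := by linarith
  have hle : ∀ x : ℝ, 0 < x → p * x ≤ q * x := fun x hx => by gcongr
  obtain ⟨M, hM0, hM1, hM⟩ := high_exists p q D hp hpq hD
  have huniq : ∀ x : ℝ, 0 < x → 1 < p * x →
      (p * x - 1) * (q * x - 1) = Real.exp (-D * x) → x = M := by
    intro x hx hx1 h
    rcases lt_trichotomy x M with h' | h' | h'
    · exact (high_lt p q D x M hp hpq hD hx h' hx1 h hM).elim
    · exact h'
    · exact (high_lt p q D M x hp hpq hD hM0 h' hM1 hM h).elim
  constructor
  · intro hlt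
    obtain ⟨m, hm0, hm1, hm⟩ := low_exists p q D hp hpq hlt
    rw [Set.ncard_eq_two]
    refine ⟨m, M, ?_, ?_⟩
    · rintro rfl
      linarith [hle m hm0]
    · ext x
      simp only [mem_setOf_eq, mem_insert_iff, mem_singleton_iff]
      constructor
      · rintro ⟨hx, h⟩
        rcases cases_sol p q D x hpq hx h with h' | h'
        · left
          rcases lt_trichotomy x m with h'' | h'' | h''
          · exact (low_lt p q D x m hp hq hx h'' (by linarith [hle m hm0]) hm1 h hm).elim
          · exact h''
          · exact (low_lt p q D m x hp hq hm0 h'' (by linarith [hle x hx]) h' hm h).elim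
        · exact Or.inr (huniq x hx h' h)
      · rintro (rfl | rfl)
        · exact ⟨hm0, hm⟩
        · exact ⟨hM0, hM⟩
  · intro hle'
    rw [Set.ncard_eq_one]
    refine ⟨M, ?_⟩
    ext x
    simp only [mem_setOf_eq, mem_singleton_iff]
    constructor
    · rintro ⟨hx, h⟩
      rcases cases_sol p q D x hpq hx h with h' | h'
      · exact (low_none p q D x hp hq hx hle' (by linarith [hle x hx]) h' h).elim
      · exact huniq x hx h' h
    · rintro rfl
      exact ⟨hM0, hM⟩

lemma core' (p q D : ℝ) (hp : 0 < p) (hq : 0 < q) (hD : 0 < D) :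
    (D > p + q →
      {x : ℝ | 0 < x ∧ (p * x - 1) * (q * x - 1) = Real.exp (-D * x)}.ncard = 2) ∧
    (D ≤ p + q →
      {x : ℝ | 0 < x ∧ (p * x - 1) * (q * x - 1) = Real.exp (-D * x)}.ncard = 1) := by
  rcases le_total p q with h | h
  · exact core p q D hp h hD
  · have := core q p D hq h hD
    simp only [add_comm q p, mul_comm (q * _ - 1) (p * _ - 1)] at this
    exact this

/-- Number of bound states of two point δ-interactions in ℝ¹ with strengths `λ₁, λ₂ > 0`
at distance `d > 0`: the characteristic equation
`(1/λ₁ - 1/(2ν))(1/λ₂ - 1/(2ν)) = e^{-2dν}/(4ν²)` on `(0, ∞)` has exactly two solutions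
if `d > 1/λ₁ + 1/λ₂`, and exactly one solution otherwise. -/
theorem two_delta_bound_states_R1 (lam₁ lam₂ d : ℝ) (hl1 : 0 < lam₁) (hl2 : 0 < lam₂)
    (hd : 0 < d) :
    (d > 1 / lam₁ + 1 / lam₂ →
      {ν : ℝ | 0 < ν ∧ (1 / lam₁ - 1 / (2 * ν)) * (1 / lam₂ - 1 / (2 * ν)) =
        Real.exp (-2 * d * ν) / (4 * ν ^ 2)}.ncard = 2) ∧
    (d ≤ 1 / lam₁ + 1 / lam₂ →
      {ν : ℝ | 0 < ν ∧ (1 / lam₁ - 1 / (2 * ν)) * (1 / lam₂ - 1 / (2 * ν)) =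
        Real.exp (-2 * d * ν) / (4 * ν ^ 2)}.ncard = 1) := by
  have hset : {ν : ℝ | 0 < ν ∧ (1 / lam₁ - 1 / (2 * ν)) * (1 / lam₂ - 1 / (2 * ν)) =
        Real.exp (-2 * d * ν) / (4 * ν ^ 2)} =
      {x : ℝ | 0 < x ∧ (2 / lam₁ * x - 1) * (2 / lam₂ * x - 1) = Real.exp (-(2 * d) * x)} := by
    ext x
    simp only [mem_setOf_eq]
    refine and_congr_right fun hx => ?_
    rw [eq_div_iff (by positivity), show -2 * d * x = -(2 * d) * x by ring]
    have : (1 / lam₁ - 1 / (2 * x)) * (1 / lam₂ - 1 / (2 * x)) * (4 * x ^ 2) =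
        (2 / lam₁ * x - 1) * (2 / lam₂ * x - 1) := by
      field_simp
      try ring
    rw [this]
  rw [hset]
  have h := core' (2 / lam₁) (2 / lam₂) (2 * d) (by positivity) (by positivity) (by positivity)
  have e : 2 / lam₁ + 2 / lam₂ = 2 * (1 / lam₁ + 1 / lam₂) := by ring
  rw [e] at h
  exact ⟨fun h' => h.1 (by linarith), fun h' => h.2 (by linarith)⟩
end

section
/- Let κ > 0, let N ≥ 1 be an integer, let μ₁, …, μ_N ≥ μ > 0, let d_{ij} = d_{ji} ≥ d > 0 for i ≠ j, and let ν > 0. Let Φ(−ν²) be the explicit principal matrix on ℍ³_κ. If √(κ² + ν²) − √(κ² + μ²) + (N−1) κ e^{−d √(κ² + ν²)} / sinh(κ d) < 0, then for every index i one has Φ_{ii}(−ν²) + Σ_{j ≠ i} |Φ_{ij}(−ν²)| < 0, and consequently the matrix Φ(−ν²) is negative definite. -/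
open Real Set Matrix Finset

/-- Gershgorin criterion for the explicit principal matrix on hyperbolic 3-space `ℍ³_κ`:
if `√(κ²+ν²) - √(κ²+μ²) + (N-1) κ e^{-d √(κ²+ν²)}/sinh(κ d) < 0`, where `μ` is a lower
bound for the `μᵢ` and `d` a lower bound for the mutual distances `dᵢⱼ`, then every
Gershgorin row sum `Φᵢᵢ + Σ_{j≠i} |Φᵢⱼ|` is negative and `Φ(-ν²)` is negative definite. -/
theorem principal_matrix_H3_negative_definite (κ μ d ν : ℝ) (hκ : 0 < κ) (hμ : 0 < μ)
    (hd : 0 < d) (hν : 0 < ν) (N : ℕ) (hN : 1 ≤ N)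
    (μs : Fin N → ℝ) (hμs : ∀ i, μ ≤ μs i)
    (D : Fin N → Fin N → ℝ) (hDsymm : ∀ i j, D i j = D j i)
    (hDd : ∀ i j, i ≠ j → d ≤ D i j)
    (Φ : Matrix (Fin N) (Fin N) ℝ)
    (hΦ : ∀ i j, Φ i j =
      if i = j then
        (1 / (4 * π)) * (Real.sqrt (κ ^ 2 + ν ^ 2) - Real.sqrt (κ ^ 2 + μs i ^ 2))
      else
        -κ * Real.exp (-(D i j) * Real.sqrt (κ ^ 2 + ν ^ 2)) /
          (4 * π * Real.sinh (κ * D i j)))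
    (h : Real.sqrt (κ ^ 2 + ν ^ 2) - Real.sqrt (κ ^ 2 + μ ^ 2) +
        ((N : ℝ) - 1) * κ * Real.exp (-d * Real.sqrt (κ ^ 2 + ν ^ 2)) /
          Real.sinh (κ * d) < 0) :
    (∀ i, Φ i i + ∑ j ∈ Finset.univ.erase i, |Φ i j| < 0) ∧
    (∀ x : Fin N → ℝ, x ≠ 0 → x ⬝ᵥ Φ.mulVec x < 0) := by
  have hpi := Real.pi_pos
  have hsymm : ∀ i j, Φ i j = Φ j i := by
    intro i j
    by_cases hij : i = j
    · rw [hij]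
    · rw [hΦ i j, hΦ j i, if_neg hij, if_neg (Ne.symm hij), hDsymm i j]
  set s := Real.sqrt (κ ^ 2 + ν ^ 2) with hs
  have hs0 : 0 ≤ s := Real.sqrt_nonneg _
  have hsh : 0 < Real.sinh (κ * d) := Real.sinh_pos_iff.2 (mul_pos hκ hd)
  have hoff : ∀ i j, i ≠ j →
      |Φ i j| ≤ κ * Real.exp (-d * s) / (4 * π * Real.sinh (κ * d)) := by
    intro i j hij
    have hD := hDd i j hij
    have hle : Real.sinh (κ * d) ≤ Real.sinh (κ * D i j) :=
      Real.sinh_le_sinh.2 (mul_le_mul_of_nonneg_left hD hκ.le)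
    have hsh2 : 0 < Real.sinh (κ * D i j) := lt_of_lt_of_le hsh hle
    rw [hΦ i j, if_neg hij, neg_mul, neg_div, abs_neg, abs_of_nonneg (by positivity)]
    have he : Real.exp (-(D i j) * s) ≤ Real.exp (-d * s) := by
      apply Real.exp_le_exp.2
      nlinarith
    gcongr
  have hrow : ∀ i, Φ i i + ∑ j ∈ Finset.univ.erase i, |Φ i j| < 0 := by
    intro i
    have hsum : ∑ j ∈ Finset.univ.erase i, |Φ i j| ≤
        ((N : ℝ) - 1) * (κ * Real.exp (-d * s) / (4 * π * Real.sinh (κ * d))) := by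
      refine (Finset.sum_le_card_nsmul _ _ _
        (fun j hj => hoff i j (Finset.ne_of_mem_erase hj).symm)).trans (le_of_eq ?_)
      rw [Finset.card_erase_of_mem (Finset.mem_univ i), Finset.card_univ, Fintype.card_fin,
        nsmul_eq_mul, Nat.cast_sub hN, Nat.cast_one]
    have hsq : Real.sqrt (κ ^ 2 + μ ^ 2) ≤ Real.sqrt (κ ^ 2 + μs i ^ 2) := by
      apply Real.sqrt_le_sqrt
      have := hμs i
      gcongr
    have hdiag : Φ i i ≤ (1 / (4 * π)) * (s - Real.sqrt (κ ^ 2 + μ ^ 2)) := by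
      rw [hΦ i i, if_pos rfl]
      gcongr
    have hfin := mul_neg_of_pos_of_neg (show 0 < 1 / (4 * π) by positivity) h
    have heq : (1 / (4 * π)) * (s - Real.sqrt (κ ^ 2 + μ ^ 2) +
        ((N : ℝ) - 1) * κ * Real.exp (-d * s) / Real.sinh (κ * d)) =
        (1 / (4 * π)) * (s - Real.sqrt (κ ^ 2 + μ ^ 2)) +
        ((N : ℝ) - 1) * (κ * Real.exp (-d * s) / (4 * π * Real.sinh (κ * d))) := by
      field_simp
    linarith
  refine ⟨hrow, ?_⟩
  intro x hx
  let B : Fin N → Fin N → ℝ := fun i j => if i = j then Φ i i else |Φ i j|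
  have hBs : ∀ i j, B i j = B j i := by
    intro i j
    by_cases hij : i = j
    · rw [hij]
    · simp only [B, if_neg hij, if_neg (Ne.symm hij), hsymm i j]
  have hBrow : ∀ i, ∑ j, B i j < 0 := by
    intro i
    rw [← Finset.add_sum_erase _ _ (Finset.mem_univ i)]
    have : ∑ j ∈ Finset.univ.erase i, B i j = ∑ j ∈ Finset.univ.erase i, |Φ i j| :=
      Finset.sum_congr rfl (fun j hj => if_neg (Finset.ne_of_mem_erase hj).symm)
    rw [this]
    simpa [B] using hrow i
  have hterm : ∀ i j, x i * (Φ i j * x j) ≤ B i j * x i ^ 2 / 2 + B i j * x j ^ 2 / 2 := by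
    intro i j
    by_cases hij : i = j
    · subst hij
      simp only [B, if_true]
      apply le_of_eq
      ring
    · simp only [B, if_neg hij]
      have h1 := neg_abs_le (Φ i j)
      have h2 := le_abs_self (Φ i j)
      nlinarith [mul_nonneg (sub_nonneg.2 h2) (sq_nonneg (x i + x j)),
        mul_nonneg (neg_le_iff_add_nonneg.1 h1) (sq_nonneg (x i - x j))]
  have hbound : x ⬝ᵥ Φ.mulVec x ≤ ∑ i, (∑ j, B i j) * x i ^ 2 := by
    have e1 : x ⬝ᵥ Φ.mulVec x = ∑ i, ∑ j, x i * (Φ i j * x j) := by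
      simp only [dotProduct, Matrix.mulVec, Finset.mul_sum]
    have e2 : ∑ i, ∑ j, B i j * x j ^ 2 / 2 = ∑ i, ∑ j, B i j * x i ^ 2 / 2 := by
      rw [Finset.sum_comm]
      refine Finset.sum_congr rfl fun i _ => Finset.sum_congr rfl fun j _ => ?_
      rw [hBs j i]
    rw [e1]
    refine (Finset.sum_le_sum fun i _ => Finset.sum_le_sum fun j _ => hterm i j).trans
      (le_of_eq ?_)
    simp only [Finset.sum_add_distrib]
    rw [e2, ← Finset.sum_add_distrib]
    refine Finset.sum_congr rfl fun i _ => ?_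
    rw [← Finset.sum_add_distrib, Finset.sum_mul]
    refine Finset.sum_congr rfl fun j _ => ?_
    ring
  refine lt_of_le_of_lt hbound ?_
  obtain ⟨k, hk⟩ := Function.ne_iff.1 hx
  have hk2 : 0 < x k ^ 2 := by
    have hk3 : x k ≠ 0 := hk
    positivity
  refine Finset.sum_neg' (fun i _ => mul_nonpos_of_nonpos_of_nonneg (hBrow i).le (sq_nonneg _))
    ⟨k, Finset.mem_univ k, mul_neg_of_neg_of_pos (hBrow k) hk2⟩
end

section
/- Let κ > 0, let N ≥ 1 be an integer, let μ₁, …, μ_N > 0 and let d_{ij} = d_{ji} > 0 for i ≠ j, and let Φ(−ν²) denote the explicit principal matrix on ℍ³_κ as a function of ν > 0. If there exists ν_* > 0 such that Φ(−ν_*²) is negative definite, then there exists ν > ν_* such that Φ(−ν²) is singular, i.e. det Φ(−ν²) = 0 (so −ν² is a bound state energy). -/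
open Real Set Matrix

/-- If the explicit principal matrix `Φ(-ν_*²)` on hyperbolic 3-space `ℍ³_κ` is negative
definite for some `ν_* > 0`, then there is a bound state: there exists `ν > ν_*` with
`det Φ(-ν²) = 0`. -/
theorem principal_matrix_H3_bound_state (κ : ℝ) (hκ : 0 < κ) (N : ℕ) (hN : 1 ≤ N)
    (μs : Fin N → ℝ) (hμs : ∀ i, 0 < μs i)
    (D : Fin N → Fin N → ℝ) (hDsymm : ∀ i j, D i j = D j i)
    (hD : ∀ i j, i ≠ j → 0 < D i j)
    (Φ : ℝ → Matrix (Fin N) (Fin N) ℝ)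
    (hΦ : ∀ ν : ℝ, ∀ i j, Φ ν i j =
      if i = j then
        (1 / (4 * π)) * (Real.sqrt (κ ^ 2 + ν ^ 2) - Real.sqrt (κ ^ 2 + μs i ^ 2))
      else
        -κ * Real.exp (-(D i j) * Real.sqrt (κ ^ 2 + ν ^ 2)) /
          (4 * π * Real.sinh (κ * D i j)))
    (νs : ℝ) (hνs : 0 < νs)
    (hneg : ∀ x : Fin N → ℝ, x ≠ 0 → x ⬝ᵥ (Φ νs).mulVec x < 0) :
    ∃ ν : ℝ, νs < ν ∧ (Φ ν).det = 0 := by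
  have hpi := Real.pi_pos
  have : Nonempty (Fin N) := ⟨⟨0, hN⟩⟩
  let K : Set (Fin N → ℝ) := Metric.sphere 0 1
  have hK : IsCompact K := isCompact_sphere 0 1
  have hKne : K.Nonempty := NormedSpace.sphere_nonempty.2 zero_le_one
  have hK0 : ∀ x ∈ K, x ≠ 0 := by
    rintro x hx rfl
    simp [K] at hx
  let f : ℝ → (Fin N → ℝ) → ℝ := fun ν x => x ⬝ᵥ (Φ ν).mulVec x
  have hf_eq : ∀ ν x, f ν x = ∑ i, ∑ j, Φ ν i j * (x i * x j) := by
    intro ν x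
    simp only [f, dotProduct, mulVec, Finset.mul_sum]
    refine Finset.sum_congr rfl fun i _ => Finset.sum_congr rfl fun j _ => by ring
  have hΦc : ∀ i j, Continuous fun ν => Φ ν i j := by
    intro i j
    simp only [hΦ]
    split_ifs
    · fun_prop
    · fun_prop
  have hf : Continuous ↿f := by
    have : (↿f) = fun p : ℝ × (Fin N → ℝ) => ∑ i, ∑ j, Φ p.1 i j * (p.2 i * p.2 j) := by
      funext p
      exact hf_eq p.1 p.2
    rw [this]
    refine continuous_finsetSum _ fun i _ => continuous_finsetSum _ fun j _ => ?_
    have := (hΦc i j).comp (continuous_fst (X := ℝ) (Y := Fin N → ℝ))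
    exact this.mul (by fun_prop)
  have hm := hK.continuous_sInf hf
  have hfx : ∀ ν, Continuous (f ν) := fun ν => hf.comp (by fun_prop : Continuous fun x => (ν, x))
  have hmin : ∀ ν, ∃ x ∈ K, sInf (f ν '' K) = f ν x ∧ ∀ y ∈ K, f ν x ≤ f ν y := fun ν =>
    hK.exists_sInf_image_eq_and_le hKne (hfx ν).continuousOn
  let C : Fin N → Fin N → ℝ := fun i j => if i = j then
    (1 / (4 * π)) * Real.sqrt (κ ^ 2 + μs i ^ 2) else κ / (4 * π * Real.sinh (κ * D i j))
  have hC : ∀ i j, 0 ≤ C i j := by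
    intro i j
    simp only [C]
    split_ifs with h
    · positivity
    · have := Real.sinh_pos_iff.2 (mul_pos hκ (hD i j h))
      positivity
  let S : ℝ := ∑ i, ∑ j, C i j
  have hS : 0 ≤ S := Finset.sum_nonneg fun i _ => Finset.sum_nonneg fun j _ => hC i j
  let ν1 : ℝ := νs + 1 + 4 * π * S
  have hν1 : νs ≤ ν1 := by
    have : 0 ≤ 4 * π * S := by positivity
    simp only [ν1]; linarith
  have hlow : ∀ x ∈ K, 0 ≤ f ν1 x := by
    intro x hx
    have hx1 : ‖x‖ = 1 := by simpa [K] using hx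
    have hxi : ∀ i, |x i| ≤ 1 := fun i => by
      have := norm_le_pi_norm x i
      rwa [hx1, Real.norm_eq_abs] at this
    have hs : ν1 ≤ Real.sqrt (κ ^ 2 + ν1 ^ 2) :=
      Real.le_sqrt_of_sq_le (by nlinarith [sq_nonneg κ])
    set s := Real.sqrt (κ ^ 2 + ν1 ^ 2) with hsdef
    have hs0 : 0 ≤ s := Real.sqrt_nonneg _
    have hsq : 1 ≤ ∑ i, x i ^ 2 := by
      obtain ⟨i, hi'⟩ := Finite.exists_max (fun i => ‖x i‖)
      have hi : ‖x i‖ = ‖x‖ :=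
        le_antisymm (norm_le_pi_norm x i) ((pi_norm_le_iff_of_nonneg (norm_nonneg _)).2 hi')
      have h1 : x i ^ 2 = 1 := by
        rw [← sq_abs, ← Real.norm_eq_abs, hi, hx1]; norm_num
      rw [← h1]
      exact Finset.single_le_sum (f := fun i => x i ^ 2) (fun i _ => sq_nonneg _) (Finset.mem_univ i)
    have hent : ∀ i j, (if i = j then s / (4 * π) * x i ^ 2 else 0) - C i j
        ≤ Φ ν1 i j * (x i * x j) := by
      intro i j
      have hab : |x i * x j| ≤ 1 := by
        rw [abs_mul]
        exact mul_le_one₀ (hxi i) (abs_nonneg _) (hxi j)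
      have hle := (abs_le.1 hab).2
      rw [hΦ]
      have hCij := hC i j
      simp only [C] at hCij ⊢
      split_ifs at hCij ⊢ with h
      · subst h
        have := mul_le_mul_of_nonneg_left hle hCij
        have e : s / (4 * π) * x i ^ 2 = 1 / (4 * π) * s * (x i * x i) := by ring
        rw [e, mul_sub, sub_mul]
        linarith
      · have he : Real.exp (-(D i j) * s) ≤ 1 := by
          rw [Real.exp_le_one_iff]
          nlinarith [hD i j h]
        have he0 := Real.exp_pos (-(D i j) * s)
        have : Real.exp (-(D i j) * s) * (x i * x j) ≤ 1 := by
          nlinarith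
        have := mul_le_mul_of_nonneg_left this hCij
        have e : -κ * Real.exp (-(D i j) * s) / (4 * π * Real.sinh (κ * D i j)) * (x i * x j)
          = -(κ / (4 * π * Real.sinh (κ * D i j)) * (Real.exp (-(D i j) * s) * (x i * x j))) := by
          ring
        rw [e]
        linarith
    have hsum := Finset.sum_le_sum fun i (_ : i ∈ Finset.univ) =>
      Finset.sum_le_sum fun j (_ : j ∈ Finset.univ) => hent i j
    rw [← hf_eq] at hsum
    simp only [Finset.sum_sub_distrib, Finset.sum_ite_eq, Finset.mem_univ, if_true,
      ← Finset.mul_sum] at hsum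
    have h2 : S ≤ s / (4 * π) := by
      rw [le_div_iff₀ (by positivity)]
      simp only [ν1] at hs
      linarith
    have h3 : s / (4 * π) * 1 ≤ s / (4 * π) * ∑ i, x i ^ 2 :=
      mul_le_mul_of_nonneg_left hsq (by positivity)
    change _ - S ≤ _ at hsum
    linarith
  have hm0 : sInf (f νs '' K) < 0 := by
    obtain ⟨x, hx, he, -⟩ := hmin νs
    rw [he]
    exact hneg x (hK0 x hx)
  have hm1 : 0 ≤ sInf (f ν1 '' K) := by
    obtain ⟨x, hx, he, -⟩ := hmin ν1
    rw [he]
    exact hlow x hx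
  obtain ⟨ν, hν, h0⟩ := intermediate_value_Icc hν1 hm.continuousOn ⟨hm0.le, hm1⟩
  have h0 : sInf (f ν '' K) = 0 := h0
  refine ⟨ν, lt_of_le_of_ne hν.1 ?_, ?_⟩
  · rintro rfl
    exact hm0.ne h0
  obtain ⟨x, hx, he, hle⟩ := hmin ν
  have hfx0 : f ν x = 0 := he.symm.trans h0
  have hpsd : (Φ ν).PosSemidef := by
    refine Matrix.PosSemidef.of_dotProduct_mulVec_nonneg ?_ ?_
    · ext i j
      simp only [conjTranspose_apply, star_trivial, hΦ]
      by_cases h : i = j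
      · subst h; rfl
      · rw [if_neg h, if_neg (Ne.symm h), hDsymm]
    · intro y
      rw [star_trivial]
      by_cases hy : y = 0
      · simp [hy]
      have hn : ‖y‖ ≠ 0 := norm_ne_zero_iff.2 hy
      have hu : ‖y‖⁻¹ • y ∈ K := by
        simp [K, norm_smul, hn]
      have h1 := hle _ hu
      rw [hfx0] at h1
      have e : y ⬝ᵥ (Φ ν).mulVec y = ‖y‖ ^ 2 * f ν (‖y‖⁻¹ • y) := by
        simp only [f, mulVec_smul, dotProduct_smul, smul_dotProduct, smul_eq_mul]
        field_simp
      rw [e]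
      positivity
  refine Matrix.exists_mulVec_eq_zero_iff.1 ⟨x, hK0 x hx, ?_⟩
  refine (hpsd.dotProduct_mulVec_zero_iff x).1 ?_
  rw [star_trivial]
  exact hfx0
end

section
/- Let t₀ > 1 and b ≥ 0. Then there exists t ∈ (1, t₀) with log(t/t₀) + b/t < 0 if and only if either (t₀ ≥ e and b < t₀/e) or (t₀ < e and b < log t₀). In particular, with t₀ = 1/2 + √(μ²/κ² + 1/4) and b = 2(N−1)/(κ d), this gives: if t₀ ≥ e then the condition for N bound states on ℍ²_κ is N − 1 < (κ d / (2e)) (1/2 + √(μ²/κ² + 1/4)), while if t₀ < e it is N − 1 < (κ d / 2) log(1/2 + √(μ²/κ² + 1/4)). -/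
open Real Set

/-- Infimum computation for the bound-state criterion on the hyperbolic plane `ℍ²_κ`:
for `t₀ > 1` and `b ≥ 0`, there exists `t ∈ (1, t₀)` with `log(t/t₀) + b/t < 0` if and
only if either (`t₀ ≥ e` and `b < t₀/e`) or (`t₀ < e` and `b < log t₀`).
(With `t₀ = 1/2 + √(μ²/κ² + 1/4)` and `b = 2(N-1)/(κ d)` this yields the criterion
for `N` bound states of `N` point δ-interactions on `ℍ²_κ`.) -/
theorem bound_state_criterion_H2 (t₀ b : ℝ) (ht₀ : 1 < t₀) (hb : 0 ≤ b) :
    (∃ t ∈ Ioo 1 t₀, Real.log (t / t₀) + b / t < 0) ↔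
      ((Real.exp 1 ≤ t₀ ∧ b < t₀ / Real.exp 1) ∨
        (t₀ < Real.exp 1 ∧ b < Real.log t₀)) := by
  have h0 : 0 < t₀ := by linarith
  have key : ∀ t : ℝ, 1 < t →
      (Real.log (t / t₀) + b / t < 0 ↔ b < t * (Real.log t₀ - Real.log t)) := by
    intro t ht
    have htp : 0 < t := by linarith
    rw [Real.log_div htp.ne' h0.ne']
    have : Real.log t - Real.log t₀ + b / t < 0 ↔ b / t < Real.log t₀ - Real.log t := by
      constructor <;> intro h <;> linarith
    rw [this, div_lt_iff₀ htp, mul_comm]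
  have small : b < Real.log t₀ → ∃ t ∈ Ioo 1 t₀, Real.log (t / t₀) + b / t < 0 := by
    intro h
    have hc : ContinuousAt (fun t : ℝ => t * (Real.log t₀ - Real.log t)) 1 :=
      continuousAt_id.mul (continuousAt_const.sub (Real.continuousAt_log one_ne_zero))
    have h1 : ∀ᶠ t in nhdsWithin (1 : ℝ) (Ioi 1), b < t * (Real.log t₀ - Real.log t) :=
      (hc.eventually (lt_mem_nhds (by simpa using h))).filter_mono nhdsWithin_le_nhds
    obtain ⟨t, ht1, ht2⟩ := (h1.and (Ioo_mem_nhdsGT ht₀)).exists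
    exact ⟨t, ht2, (key t ht2.1).2 ht1⟩
  constructor
  · rintro ⟨t, ⟨ht1, ht2⟩, h⟩
    rw [key t ht1] at h
    have htp : 0 < t := by linarith
    rcases le_or_gt (Real.exp 1) t₀ with he | he
    · refine Or.inl ⟨he, h.trans_le ?_⟩
      have h2 := Real.add_one_le_exp (Real.log t₀ - Real.log t - 1)
      rw [Real.exp_sub, Real.exp_sub, Real.exp_log h0, Real.exp_log htp] at h2
      calc t * (Real.log t₀ - Real.log t) ≤ t * (t₀ / t / Real.exp 1) := by
            apply mul_le_mul_of_nonneg_left _ htp.le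
            linarith
        _ = t₀ / Real.exp 1 := by field_simp
    · refine Or.inr ⟨he, h.trans_le ?_⟩
      have hL : Real.log t₀ < 1 := by
        rwa [Real.log_lt_iff_lt_exp h0]
      have h2 := Real.one_sub_inv_le_log_of_pos htp
      have h3 : t * (1 - t⁻¹) = t - 1 := by field_simp
      have h4 := mul_le_mul_of_nonneg_left h2 htp.le
      nlinarith
  · rintro (⟨he, h⟩ | ⟨_, h⟩)
    · rcases he.eq_or_lt with he | he
      · apply small
        rw [← he] at h ⊢
        rwa [Real.log_exp, ← div_self (Real.exp_pos 1).ne']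
      · have h1 : 1 < t₀ / Real.exp 1 := by
          rwa [lt_div_iff₀ (Real.exp_pos 1), one_mul]
        refine ⟨t₀ / Real.exp 1, ⟨h1, div_lt_self h0 (by simp)⟩, (key _ h1).2 ?_⟩
        rw [Real.log_div h0.ne' (Real.exp_pos 1).ne', Real.log_exp]
        linarith
    · exact small h
end

section
/- Let m, d > 0, let μ be real with μ < m, and let N ≥ 1 be an integer. Then there exists E ∈ (μ, m) such that log((m − E)/(m − μ)) + (N−1)/(d (m − E)) < 0 if and only if N − 1 < d (m − μ)/e, where e is Euler's number. -/
open Real Set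

/-- Infimum computation for the relativistic bound-state criterion on ℝ²: for
`m, d > 0`, `μ < m` real and an integer `N ≥ 1`, there exists `E ∈ (μ, m)` with
`log((m - E)/(m - μ)) + (N-1)/(d (m - E)) < 0` if and only if
`N - 1 < d (m - μ)/e`, where `e` is Euler's number. -/
theorem relativistic_bound_state_criterion_R2 (m d μ : ℝ) (hm : 0 < m) (hd : 0 < d)
    (hμ : μ < m) (N : ℕ) (hN : 1 ≤ N) :
    (∃ E ∈ Ioo μ m,
        Real.log ((m - E) / (m - μ)) + ((N : ℝ) - 1) / (d * (m - E)) < 0) ↔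
      (N : ℝ) - 1 < d * (m - μ) / Real.exp 1 := by
  have hL : 0 < m - μ := by linarith
  have he : 0 < Real.exp 1 := Real.exp_pos 1
  constructor
  · rintro ⟨E, ⟨h1, h2⟩, h⟩
    have hx : 0 < m - E := by linarith
    have ht : 0 < (m - E) / (m - μ) := div_pos hx hL
    have h3 : Real.log ((Real.exp 1 * ((m - E) / (m - μ)))⁻¹)
        ≤ (Real.exp 1 * ((m - E) / (m - μ)))⁻¹ - 1 :=
      Real.log_le_sub_one_of_pos (by positivity)
    rw [Real.log_inv, Real.log_mul he.ne' ht.ne', Real.log_exp] at h3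
    have h4 : ((N : ℝ) - 1) / (d * (m - E)) < (Real.exp 1 * ((m - E) / (m - μ)))⁻¹ := by
      linarith
    rw [div_lt_iff₀ (by positivity)] at h4
    have h5 : (Real.exp 1 * ((m - E) / (m - μ)))⁻¹ * (d * (m - E))
        = d * (m - μ) / Real.exp 1 := by
      field_simp
    rwa [h5] at h4
  · intro h
    have he1 : 1 < Real.exp 1 := Real.one_lt_exp_iff.mpr one_pos
    have h1 : (m - μ) / Real.exp 1 < m - μ := div_lt_self hL he1
    have h2 : 0 < (m - μ) / Real.exp 1 := div_pos hL he
    refine ⟨m - (m - μ) / Real.exp 1, ⟨by linarith, by linarith⟩, ?_⟩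
    have h3 : m - (m - (m - μ) / Real.exp 1) = (m - μ) / Real.exp 1 := by ring
    have h4 : (m - μ) / Real.exp 1 / (m - μ) = (Real.exp 1)⁻¹ := by
      field_simp
    rw [h3, h4, Real.log_inv, Real.log_exp]
    have h5 : ((N : ℝ) - 1) / (d * ((m - μ) / Real.exp 1)) < 1 := by
      rw [div_lt_one (by positivity), ← mul_div_assoc]
      exact h
    linarith
end

section
/- Let m > 0, let N ≥ 1 be an integer, let 0 < μ_i ≤ μ < m for i = 1,…,N, let d_{ij} = d_{ji} ≥ d > 0 for i ≠ j, and let E be real with μ < E < m. Let Φ(E) be the relativistic principal matrix on ℝ². If (1/(2π)) log((m − E)/(m − μ)) + (N − 1)/(2π d (m − E)) < 0, then for every index i one has Φ_{ii}(E) + Σ_{j ≠ i} |Φ_{ij}(E)| < 0, and consequently Φ(E) is negative definite. -/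
open Real MeasureTheory Set Matrix Finset

lemma aux_bound (m E d D : ℝ) (hm : 0 < m) (hd : 0 < d) (hE : E < m) (hD : d ≤ D) :
    0 ≤ (∫ s in Ioi (0 : ℝ), Real.exp (-D * (m * Real.sqrt (s ^ 2 + 1) - E * s)) /
              Real.sqrt (s ^ 2 + 1)) ∧
    (∫ s in Ioi (0 : ℝ), Real.exp (-D * (m * Real.sqrt (s ^ 2 + 1) - E * s)) /
              Real.sqrt (s ^ 2 + 1)) ≤ 1 / (d * (m - E)) := by
  have hc : 0 < d * (m - E) := mul_pos hd (by linarith)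
  refine ⟨integral_nonneg fun s => by positivity, ?_⟩
  have hint : (∫ s in Ioi (0 : ℝ), Real.exp (-(d * (m - E)) * s)) = 1 / (d * (m - E)) := by
    rw [integral_exp_mul_Ioi (by linarith)]
    simp
  rw [← hint]
  apply integral_mono_of_nonneg
  · exact Filter.Eventually.of_forall fun s => by positivity
  · exact integrableOn_exp_mul_Ioi (by linarith) 0
  · refine (ae_restrict_iff' measurableSet_Ioi).2 (Filter.Eventually.of_forall fun s hs => ?_)
    have hs0 : 0 < s := hs
    have h1 : 1 ≤ Real.sqrt (s ^ 2 + 1) := Real.le_sqrt_of_sq_le (by nlinarith)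
    have h2 : s ≤ Real.sqrt (s ^ 2 + 1) := Real.le_sqrt_of_sq_le (by nlinarith)
    refine (div_le_self (Real.exp_pos _).le h1).trans (Real.exp_le_exp.2 ?_)
    have h3 : (m - E) * s ≤ m * Real.sqrt (s ^ 2 + 1) - E * s := by
      nlinarith
    have h4 : 0 ≤ (m - E) * s := mul_nonneg (by linarith) hs0.le
    have h5 : d * ((m - E) * s) ≤ D * (m * Real.sqrt (s ^ 2 + 1) - E * s) :=
      mul_le_mul hD h3 h4 (by linarith)
    linarith

lemma aux_gersh {N : ℕ} (Φ : Matrix (Fin N) (Fin N) ℝ) (hs : ∀ i j, Φ i j = Φ j i)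
    (h : ∀ i, Φ i i + ∑ j ∈ Finset.univ.erase i, |Φ i j| < 0)
    (x : Fin N → ℝ) (hx : x ≠ 0) : x ⬝ᵥ Φ.mulVec x < 0 := by
  let A : Fin N → Fin N → ℝ := fun i j => if i = j then Φ i i else |Φ i j|
  have hA : ∀ i, ∑ j, A i j < 0 := by
    intro i
    rw [← Finset.add_sum_erase _ _ (Finset.mem_univ i)]
    convert h i using 2
    · simp [A]
    · refine Finset.sum_congr rfl fun j hj => ?_
      simp [A, (Finset.ne_of_mem_erase hj).symm]
  have hAs : ∀ i j, A i j = A j i := by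
    intro i j
    by_cases hij : i = j
    · rw [hij]
    · simp [A, hij, Ne.symm hij, hs i j]
  have h1 : x ⬝ᵥ Φ.mulVec x ≤ ∑ i, ∑ j, (A i j * x i ^ 2 / 2 + A i j * x j ^ 2 / 2) := by
    simp only [dotProduct, mulVec, Finset.mul_sum]
    refine Finset.sum_le_sum fun i _ => Finset.sum_le_sum fun j _ => ?_
    by_cases hij : i = j
    · subst hij
      simp only [A, if_true]
      linarith
    · simp only [A, hij, if_false]
      rcases abs_cases (Φ i j) with ⟨he, h0⟩ | ⟨he, h0⟩ <;> rw [he]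
      · nlinarith [mul_nonneg h0 (sq_nonneg (x i - x j))]
      · nlinarith [mul_nonneg (neg_pos.2 h0).le (sq_nonneg (x i + x j))]
  have h2 : ∑ i, ∑ j, (A i j * x i ^ 2 / 2 + A i j * x j ^ 2 / 2)
      = ∑ i, (∑ j, A i j) * x i ^ 2 := by
    have h3 : ∑ i, ∑ j, A i j * x j ^ 2 / 2 = ∑ i, ∑ j, A i j * x i ^ 2 / 2 := by
      rw [Finset.sum_comm]
      refine Finset.sum_congr rfl fun i _ => Finset.sum_congr rfl fun j _ => ?_
      rw [hAs]
    simp only [Finset.sum_add_distrib]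
    rw [h3, ← Finset.sum_add_distrib]
    refine Finset.sum_congr rfl fun i _ => ?_
    rw [← Finset.sum_add_distrib, Finset.sum_mul]
    exact Finset.sum_congr rfl fun j _ => by ring
  refine h1.trans_lt (h2 ▸ ?_)
  obtain ⟨k, hk⟩ := Function.ne_iff.1 hx
  have hk' : x k ≠ 0 := hk
  apply Finset.sum_neg'
  · exact fun i _ => mul_nonpos_of_nonpos_of_nonneg (hA i).le (sq_nonneg _)
  · exact ⟨k, Finset.mem_univ k, mul_neg_of_neg_of_pos (hA k) (by positivity)⟩

/-- Gershgorin criterion for the relativistic principal matrix on ℝ²: if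
`(1/(2π)) log((m-E)/(m-μ)) + (N-1)/(2π d (m-E)) < 0`, where `μ < m` is an upper bound
for the `μᵢ` and `d` a lower bound for the mutual distances `dᵢⱼ`, and `μ < E < m`,
then every Gershgorin row sum `Φᵢᵢ(E) + Σ_{j≠i} |Φᵢⱼ(E)|` is negative and `Φ(E)` is
negative definite. -/
theorem relativistic_principal_matrix_negative_definite (m μ d E : ℝ) (hm : 0 < m)
    (hμm : μ < m) (hd : 0 < d) (hE₁ : μ < E) (hE₂ : E < m)
    (N : ℕ) (hN : 1 ≤ N)
    (μs : Fin N → ℝ) (hμs : ∀ i, 0 < μs i) (hμs' : ∀ i, μs i ≤ μ)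
    (D : Fin N → Fin N → ℝ) (hDsymm : ∀ i j, D i j = D j i)
    (hDd : ∀ i j, i ≠ j → d ≤ D i j)
    (Φ : Matrix (Fin N) (Fin N) ℝ)
    (hΦ : ∀ i j, Φ i j =
      if i = j then (1 / (2 * π)) * Real.log ((m - E) / (m - μs i))
      else
        -(1 / (2 * π)) *
          ∫ s in Ioi (0 : ℝ),
            Real.exp (-(D i j) * (m * Real.sqrt (s ^ 2 + 1) - E * s)) /
              Real.sqrt (s ^ 2 + 1))
    (h : (1 / (2 * π)) * Real.log ((m - E) / (m - μ)) +
        ((N : ℝ) - 1) / (2 * π * d * (m - E)) < 0) :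
    (∀ i, Φ i i + ∑ j ∈ Finset.univ.erase i, |Φ i j| < 0) ∧
    (∀ x : Fin N → ℝ, x ≠ 0 → x ⬝ᵥ Φ.mulVec x < 0) := by
  have hsymm : ∀ i j, Φ i j = Φ j i := by
    intro i j
    by_cases hij : i = j
    · rw [hij]
    · rw [hΦ i j, hΦ j i, if_neg hij, if_neg (Ne.symm hij), hDsymm i j]
  have hrow : ∀ i, Φ i i + ∑ j ∈ Finset.univ.erase i, |Φ i j| < 0 := by
    intro i
    have hp : 0 < 1 / (2 * π) := by positivity
    have hdiag : Φ i i ≤ (1 / (2 * π)) * Real.log ((m - E) / (m - μ)) := by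
      rw [hΦ i i, if_pos rfl]
      have h1 := hμs' i
      refine mul_le_mul_of_nonneg_left (Real.log_le_log ?_ ?_) hp.le
      · exact div_pos (by linarith) (by linarith)
      · exact div_le_div_of_nonneg_left (by linarith) (by linarith) (by linarith)
    have hoff : ∑ j ∈ Finset.univ.erase i, |Φ i j| ≤
        ((N : ℝ) - 1) / (2 * π * d * (m - E)) := by
      have h2 : ∑ j ∈ Finset.univ.erase i, |Φ i j| ≤
          ∑ j ∈ Finset.univ.erase i, (1 / (2 * π)) * (1 / (d * (m - E))) := by
        refine Finset.sum_le_sum fun j hj => ?_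
        have hij : i ≠ j := (Finset.ne_of_mem_erase hj).symm
        obtain ⟨b0, b1⟩ := aux_bound m E d (D i j) hm hd hE₂ (hDd i j hij)
        rw [hΦ i j, if_neg hij, neg_mul, abs_neg, abs_of_nonneg (mul_nonneg hp.le b0)]
        exact mul_le_mul_of_nonneg_left b1 hp.le
      refine h2.trans (le_of_eq ?_)
      rw [Finset.sum_const, Finset.card_erase_of_mem (Finset.mem_univ i), Finset.card_univ,
        Fintype.card_fin, nsmul_eq_mul, Nat.cast_sub hN, Nat.cast_one]
      have : m - E ≠ 0 := by linarith
      field_simp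
    linarith
  exact ⟨hrow, fun x hx => aux_gersh Φ hsymm hrow x hx⟩
end

section
/- For every κ > 0, t > 0 and r ≥ 0, the heat kernel of the hyperbolic plane ℍ²_κ satisfies K_t(r) < (3/t) exp(−r²/(4t) − κ² t/4); that is, (√2/κ)(4π t)^{−3/2} e^{−κ² t/4} ∫_{κ r}^{∞} s e^{−s²/(4κ² t)} / √(cosh s − cosh(κ r)) ds < (3/t) exp(−r²/(4t) − κ² t/4). -/
open Real MeasureTheory Set

lemma aux_cosh (a s : ℝ) (ha : 0 ≤ a) (hs : a < s) :
    (s ^ 2 - a ^ 2) / 2 ≤ Real.cosh s - Real.cosh a := by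
  have h : Real.cosh s - Real.cosh a = 2 * (Real.sinh ((s + a) / 2) * Real.sinh ((s - a) / 2)) := by
    have e1 : s = (s + a) / 2 + (s - a) / 2 := by ring
    have e2 : a = (s + a) / 2 - (s - a) / 2 := by ring
    have h1 := Real.cosh_add ((s + a) / 2) ((s - a) / 2)
    have h2 := Real.cosh_sub ((s + a) / 2) ((s - a) / 2)
    rw [← e1] at h1
    rw [← e2] at h2
    rw [h1, h2]; ring
  have h1 : (s + a) / 2 ≤ Real.sinh ((s + a) / 2) := Real.self_le_sinh_iff.2 (by linarith)
  have h2 : (s - a) / 2 ≤ Real.sinh ((s - a) / 2) := Real.self_le_sinh_iff.2 (by linarith)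
  have h3 := mul_le_mul h1 h2 (by linarith) (by linarith)
  rw [h]; nlinarith

lemma aux_image (a : ℝ) (ha : 0 ≤ a) : (fun s : ℝ => s ^ 2 - a ^ 2) '' Ioi a = Ioi 0 := by
  ext u
  simp only [mem_image, mem_Ioi]
  constructor
  · rintro ⟨s, hs, rfl⟩; nlinarith
  · intro hu
    refine ⟨Real.sqrt (u + a ^ 2), Real.lt_sqrt_of_sq_lt (by linarith), ?_⟩
    rw [Real.sq_sqrt (by positivity)]; ring

lemma aux_int_s17 (a c : ℝ) (ha : 0 ≤ a) (hc : 0 < c) :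
    IntegrableOn (fun s : ℝ => 2 * s * ((s ^ 2 - a ^ 2) ^ ((1 / 2 : ℝ) - 1) *
      Real.exp (-(c * (s ^ 2 - a ^ 2))))) (Ioi a) ∧
    ∫ s in Ioi a, 2 * s * ((s ^ 2 - a ^ 2) ^ ((1 / 2 : ℝ) - 1) *
      Real.exp (-(c * (s ^ 2 - a ^ 2)))) = Real.sqrt (π / c) := by
  set g : ℝ → ℝ := fun u => u ^ ((1 / 2 : ℝ) - 1) * Real.exp (-(c * u)) with hg
  have hI : ∫ u in Ioi 0, g u = Real.sqrt (π / c) := by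
    rw [hg, Real.integral_rpow_mul_exp_neg_mul_Ioi (by norm_num) hc, Real.Gamma_one_half_eq,
      ← Real.sqrt_eq_rpow, ← Real.sqrt_mul (by positivity)]
    congr 1; ring
  have hgi : IntegrableOn g (Ioi 0) := by
    by_contra hn
    rw [integral_undef hn] at hI
    have : 0 < Real.sqrt (π / c) := Real.sqrt_pos.2 (by positivity)
    linarith
  have hd : ∀ s ∈ Ioi a, HasDerivWithinAt (fun s : ℝ => s ^ 2 - a ^ 2) (2 * s) (Ioi a) s := by
    intro s _
    simpa using (((hasDerivAt_id s).pow 2).sub_const (a ^ 2)).hasDerivWithinAt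
  have hinj : InjOn (fun s : ℝ => s ^ 2 - a ^ 2) (Ioi a) := by
    intro x hx y hy hxy
    simp only [mem_Ioi] at hx hy hxy
    exact (pow_left_inj₀ (by linarith) (by linarith) two_ne_zero).1 (by linarith)
  have hcg : ∀ s ∈ Ioi a, |2 * s| • g (s ^ 2 - a ^ 2) = 2 * s * g (s ^ 2 - a ^ 2) := by
    intro s hs
    rw [abs_of_nonneg (by have : a < s := hs; linarith), smul_eq_mul]
  constructor
  · have := (integrableOn_image_iff_integrableOn_abs_deriv_smul measurableSet_Ioi hd hinj g).1
      (by rw [aux_image a ha]; exact hgi)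
    exact this.congr_fun hcg measurableSet_Ioi
  · have := integral_image_eq_integral_abs_deriv_smul measurableSet_Ioi hd hinj g
    rw [aux_image a ha, hI, setIntegral_congr_fun measurableSet_Ioi hcg] at this
    exact this.symm

lemma aux_bound_s17 (a c : ℝ) (ha : 0 ≤ a) (hc : 0 < c) :
    ∫ s in Ioi a, s * Real.exp (-(c * s ^ 2)) / Real.sqrt (Real.cosh s - Real.cosh a) ≤
      Real.sqrt 2 / 2 * Real.exp (-(c * a ^ 2)) * Real.sqrt (π / c) := by
  obtain ⟨h1, h2⟩ := aux_int_s17 a c ha hc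
  rw [← h2, ← integral_const_mul]
  refine integral_mono_of_nonneg ?_ (h1.const_mul _) ?_
  · filter_upwards [ae_restrict_mem measurableSet_Ioi] with s hs
    have hs : a < s := hs
    have : 0 ≤ s := by linarith
    simp only [Pi.zero_apply]; positivity
  · filter_upwards [ae_restrict_mem measurableSet_Ioi] with s hs
    have hs : a < s := hs
    have hs0 : 0 < s := by linarith
    have hu : 0 < s ^ 2 - a ^ 2 := by nlinarith
    have hE : Real.exp (-(c * s ^ 2)) =
        Real.exp (-(c * a ^ 2)) * Real.exp (-(c * (s ^ 2 - a ^ 2))) := by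
      rw [← Real.exp_add]; ring_nf
    have hp : (s ^ 2 - a ^ 2) ^ ((1 / 2 : ℝ) - 1) = (Real.sqrt (s ^ 2 - a ^ 2))⁻¹ := by
      rw [Real.sqrt_eq_rpow, ← Real.rpow_neg hu.le]; norm_num
    have hq := Real.sqrt_le_sqrt (aux_cosh a s ha hs)
    rw [Real.sqrt_div hu.le] at hq
    have hup := Real.sqrt_pos.2 hu
    calc _ ≤ s * Real.exp (-(c * s ^ 2)) / (Real.sqrt (s ^ 2 - a ^ 2) / Real.sqrt 2) := by
          gcongr
      _ = _ := by
          simp only [hp, hE]; field_simp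

/-- Davies–Mandouvalos type Gaussian upper bound with explicit constant for the heat
kernel of the hyperbolic plane `ℍ²_κ`: for `κ > 0`, `t > 0` and `r ≥ 0`,
`(√2/κ)(4π t)^{-3/2} e^{-κ² t/4} ∫_{κ r}^∞ s e^{-s²/(4κ² t)}/√(cosh s - cosh(κ r)) ds
  < (3/t) exp(-r²/(4t) - κ² t/4)`. -/
theorem heat_kernel_H2_upper_bound (κ t r : ℝ) (hκ : 0 < κ) (ht : 0 < t) (hr : 0 ≤ r) :
    (Real.sqrt 2 / κ) * (4 * π * t) ^ (-(3 : ℝ) / 2) * Real.exp (-κ ^ 2 * t / 4) *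
        (∫ s in Ioi (κ * r),
          s * Real.exp (-s ^ 2 / (4 * κ ^ 2 * t)) /
            Real.sqrt (Real.cosh s - Real.cosh (κ * r)))
      < (3 / t) * Real.exp (-r ^ 2 / (4 * t) - κ ^ 2 * t / 4) := by
  have hb := aux_bound_s17 (κ * r) (1 / (4 * κ ^ 2 * t)) (by positivity) (by positivity)
  have e : ∀ s : ℝ, -s ^ 2 / (4 * κ ^ 2 * t) = -(1 / (4 * κ ^ 2 * t) * s ^ 2) := by
    intro s; ring
  simp only [e]
  have e2 : -(1 / (4 * κ ^ 2 * t) * (κ * r) ^ 2) = -r ^ 2 / (4 * t) := by field_simp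
  have e3 : Real.sqrt (π / (1 / (4 * κ ^ 2 * t))) = κ * Real.sqrt (4 * π * t) := by
    rw [show π / (1 / (4 * κ ^ 2 * t)) = κ ^ 2 * (4 * π * t) by field_simp,
      Real.sqrt_mul (by positivity), Real.sqrt_sq hκ.le]
  rw [e2, e3] at hb
  have hX : 0 < 4 * π * t := by positivity
  have e4 : (4 * π * t) ^ (-(3 : ℝ) / 2) * Real.sqrt (4 * π * t) = 1 / (4 * π * t) := by
    rw [Real.sqrt_eq_rpow, ← Real.rpow_add hX, show -(3 : ℝ) / 2 + 1 / 2 = -1 by norm_num,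
      Real.rpow_neg_one, one_div]
  have e5 : Real.exp (-r ^ 2 / (4 * t) - κ ^ 2 * t / 4) =
      Real.exp (-κ ^ 2 * t / 4) * Real.exp (-r ^ 2 / (4 * t)) := by
    rw [← Real.exp_add]; ring_nf
  have h2 : Real.sqrt 2 * Real.sqrt 2 = 2 := Real.mul_self_sqrt (by norm_num)
  refine lt_of_le_of_lt (mul_le_mul_of_nonneg_left hb (by positivity)) ?_
  rw [e5]
  have e6 : (Real.sqrt 2 / κ) * (4 * π * t) ^ (-(3 : ℝ) / 2) * Real.exp (-κ ^ 2 * t / 4) *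
      (Real.sqrt 2 / 2 * Real.exp (-r ^ 2 / (4 * t)) * (κ * Real.sqrt (4 * π * t))) =
      1 / (4 * π * t) * (Real.exp (-κ ^ 2 * t / 4) * Real.exp (-r ^ 2 / (4 * t))) := by
    rw [← e4]
    calc _ = (Real.sqrt 2 * Real.sqrt 2) / 2 * (κ / κ) *
          ((4 * π * t) ^ (-(3 : ℝ) / 2) * Real.sqrt (4 * π * t)) *
          (Real.exp (-κ ^ 2 * t / 4) * Real.exp (-r ^ 2 / (4 * t))) := by ring
      _ = _ := by rw [h2, div_self hκ.ne']; ring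
  rw [e6]
  refine mul_lt_mul_of_pos_right ?_ (by positivity)
  rw [div_lt_div_iff₀ hX ht]
  nlinarith [Real.pi_gt_three]
end
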